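/- arXiv:1508.01961 — 2 statements merged into one kernel-verified Lean document; each statement's English description precedes it below -/
import Mathlib

section
/- Let θ be a well-founded tree on ℕ, let X be a Banach space with an unconditional basis (e_s)_{s∈θ} indexed by θ, and let Y be an infinite-dimensional closed subspace of X. Then Y contains a basic sequence (y_k) that is equivalent to a semi-normalized block sequence (x_k) of (e_s)_{s∈θ} whose supports are pairwise completely incomparable subsets of θ. -/
def TreeComparable (s t : List ℕ) : Prop := s <+: t ∨ t <+: s

def IsTree (θ : Set (List ℕ)) : Prop := ∀ s ∈ θ, ∀ t : List ℕ, t <+: s → t ∈ θ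

def CompIncomp (A B : Set (List ℕ)) : Prop := ∀ s ∈ A, ∀ t ∈ B, ¬ TreeComparable s t

def HasBranch (θ : Set (List ℕ)) : Prop := ∃ β : ℕ → ℕ, ∀ n, (List.range n).map β ∈ θ

def CompatibleEnum (σ : ℕ ≃ List ℕ) : Prop := ∀ s t : List ℕ, s <+: t → σ.symm s ≤ σ.symm t

def IsBasicSeq {E : Type*} [NormedAddCommGroup E] [NormedSpace ℝ E] (e : ℕ → E) : Prop :=
  (∀ n, e n ≠ 0) ∧ ∃ C : ℝ, 0 < C ∧ ∀ (a : ℕ → ℝ) (n m : ℕ), n ≤ m →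
    ‖∑ i ∈ Finset.range n, a i • e i‖ ≤ C * ‖∑ i ∈ Finset.range m, a i • e i‖


open Classical in
/-- A system of uniformly bounded projections onto the coordinate sets. -/
structure ProjSys {X : Type*} [NormedAddCommGroup X] [NormedSpace ℝ X]
    (θ : Set (List ℕ)) (e : List ℕ → X) (M : ℝ) (P : Set (List ℕ) → X →L[ℝ] X) : Prop where
  one_le : 1 ≤ M
  bound : ∀ A x, ‖P A x‖ ≤ M * ‖x‖
  comp : ∀ A B x, P A (P B x) = P (A ∩ B) x
  univ : ∀ x, P Set.univ x = x
  union : ∀ A B x, Disjoint A B → P (A ∪ B) x = P A x + P B x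
  theta : ∀ x, P θ x = x
  empty : ∀ x, P ∅ x = 0
  rep : ∀ (D : Finset (List ℕ)) x, ∃ z : List ℕ →₀ ℝ, (z.support : Set (List ℕ)) ⊆ D ∩ θ ∧
    P D x = ∑ s ∈ z.support, z s • e s
  approx : ∀ x, ∀ ε : ℝ, 0 < ε → ∃ F : Finset (List ℕ), ‖x - P F x‖ < ε

open Classical in
theorem exists_projSys {X : Type*} [NormedAddCommGroup X] [NormedSpace ℝ X] [CompleteSpace X]
    (θ : Set (List ℕ)) (e : List ℕ → X)
    (hdense : DenseRange fun z : {z : List ℕ →₀ ℝ // ↑z.support ⊆ θ} =>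
      ∑ s ∈ (z : List ℕ →₀ ℝ).support, (z : List ℕ →₀ ℝ) s • e s)
    (huncond : ∃ M : ℝ, 0 < M ∧ ∀ z : List ℕ →₀ ℝ, ↑z.support ⊆ θ →
      ∀ F : Finset (List ℕ),
        ‖∑ s ∈ z.support ∩ F, z s • e s‖ ≤ M * ‖∑ s ∈ z.support, z s • e s‖) :
    ∃ M P, ProjSys θ e M P := by
  obtain ⟨M, hM, hu⟩ := huncond
  let T : Set (List ℕ) → (List ℕ →₀ ℝ) →ₗ[ℝ] X := fun A =>
    Finsupp.linearCombination ℝ ((A ∩ θ).indicator e)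
  let S : (List ℕ →₀ ℝ) →ₗ[ℝ] X := T Set.univ
  have hT : ∀ A z, T A z = ∑ s ∈ z.support with s ∈ A ∩ θ, z s • e s := by
    intro A z
    simp only [T, Finsupp.linearCombination_apply, Finsupp.sum]
    rw [Finset.sum_filter]
    refine Finset.sum_congr rfl fun s _ => ?_
    by_cases h : s ∈ A ∩ θ <;> simp [Set.indicator, h]
  have hTf : ∀ A z, T A z = S (z.filter (· ∈ A)) := by
    intro A z
    rw [hT]
    simp only [S]
    rw [hT, Finsupp.support_filter, Finset.filter_filter]
    refine Finset.sum_congr ?_ ?_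
    · ext s; simp
    · intro s hs
      simp at hs
      simp [hs.2.1]
  have hSd : DenseRange S := by
    refine hdense.mono ?_
    rintro _ ⟨⟨z, hz⟩, rfl⟩
    refine ⟨z, ?_⟩
    simp only [S]
    rw [hT]
    congr 1
    ext s
    simp
    intro h
    exact hz (by simpa using h)
  have hTb : ∀ A z, ‖T A z‖ ≤ max M 1 * ‖S z‖ := by
    intro A z
    have h := hu (z.filter (· ∈ θ)) (by intro s; simp) (z.support.filter (· ∈ A))
    have e1 : ∑ s ∈ (z.filter (· ∈ θ)).support, (z.filter (· ∈ θ)) s • e s = S z := by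
      simp only [S]
      rw [hT, Finsupp.support_filter]
      refine Finset.sum_congr ?_ ?_
      · ext s; simp
      · intro s hs
        simp at hs
        simp [hs.2]
    have e2 : ∑ s ∈ (z.filter (· ∈ θ)).support ∩ (z.support.filter (· ∈ A)),
        (z.filter (· ∈ θ)) s • e s = T A z := by
      rw [hT, Finsupp.support_filter]
      refine Finset.sum_congr ?_ ?_
      · ext s; simp; tauto
      · intro s hs
        have := (Finset.mem_filter.1 hs).2.2
        simp [this]
    rw [e1, e2] at h
    exact h.trans (by gcongr; exact le_max_left _ _)
  let P : Set (List ℕ) → X →L[ℝ] X := fun A => (T A).extendOfNorm S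
  have hPS : ∀ A z, P A (S z) = T A z := fun A z =>
    LinearMap.extendOfNorm_eq hSd ⟨_, hTb A⟩ z
  have hPb : ∀ A x, ‖P A x‖ ≤ max M 1 * ‖x‖ := fun A x =>
    LinearMap.norm_extendOfNorm_apply_le hSd _ (hTb A) x
  have ind : ∀ f g : X →L[ℝ] X, (∀ z, f (S z) = g (S z)) → ∀ x, f x = g x := by
    intro f g h x
    exact congrFun (hSd.equalizer f.continuous g.continuous (funext h)) x
  refine ⟨max M 1, P, le_max_right _ _, hPb, ?_, ?_, ?_, ?_, ?_, ?_, ?_⟩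
  · intro A B x
    refine ind ((P A).comp (P B)) (P (A ∩ B)) ?_ x
    intro z
    simp only [ContinuousLinearMap.comp_apply]
    rw [hPS, hTf B, hPS, hPS, hTf A, hTf (A ∩ B)]
    congr 1
    ext s
    by_cases h1 : s ∈ A <;> by_cases h2 : s ∈ B <;> simp [h1, h2, Finsupp.filter_apply]
  · intro x
    refine ind (P Set.univ) (ContinuousLinearMap.id ℝ X) ?_ x
    intro z
    rw [hPS]; rfl
  · intro A B x hAB
    refine ind (P (A ∪ B)) (P A + P B) ?_ x
    intro z
    rw [add_apply, hPS, hPS, hPS, hTf A, hTf B, hTf (A ∪ B), ← map_add]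
    congr 1
    ext s
    have hd : s ∈ A → s ∉ B := fun h => Set.disjoint_left.1 hAB h
    by_cases h1 : s ∈ A <;> by_cases h2 : s ∈ B <;> simp [h1, h2, Finsupp.filter_apply]
    exact (hd h1 h2).elim
  · intro x
    refine ind (P θ) (ContinuousLinearMap.id ℝ X) ?_ x
    intro z
    rw [hPS]
    simp [S, T]
  · intro x
    refine ind (P ∅) 0 ?_ x
    intro z
    rw [hPS]
    simp [T, Finsupp.linearCombination_apply]
  · intro D x
    let V : Submodule ℝ X := (Finsupp.supported ℝ ℝ ((D : Set (List ℕ)) ∩ θ)).map S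
    have hVfd : FiniteDimensional ℝ V := by
      have : Finite ((D : Set (List ℕ)) ∩ θ : Set _) := (D.finite_toSet.inter_of_left θ)
      have : FiniteDimensional ℝ (Finsupp.supported ℝ ℝ ((D : Set (List ℕ)) ∩ θ)) :=
        (Finsupp.supportedEquivFinsupp ((D : Set (List ℕ)) ∩ θ)).symm.finiteDimensional
      infer_instance
    have hVc : IsClosed (V : Set X) := V.closed_of_finiteDimensional
    have : P D x ∈ V := by
      refine hSd.induction_on (p := fun x => P D x ∈ V) x (hVc.preimage (P D).continuous) ?_
      intro z
      rw [hPS]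
      refine ⟨z.filter (· ∈ (D : Set (List ℕ)) ∩ θ), ?_, ?_⟩
      · intro s; simp
      · simp only [S]
        rw [hT, hT, Finsupp.support_filter, Finset.filter_filter]
        refine Finset.sum_congr ?_ ?_
        · ext s; simp
        · intro s hs
          simp at hs
          simp [hs.2]
    obtain ⟨z, hz, h⟩ := this
    refine ⟨z, hz, ?_⟩
    rw [← h]
    simp only [S]
    rw [hT]
    congr 1
    ext s
    simp
    intro h
    exact (hz (by simpa using h)).2
  · intro x ε hε
    have hM1 : (0:ℝ) < 1 + max M 1 := by positivity
    obtain ⟨z, hz⟩ := hSd.exists_dist_lt x (div_pos hε hM1)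
    rw [dist_eq_norm] at hz
    refine ⟨z.support, ?_⟩
    have e1 : P z.support (S z) = S z := by
      rw [hPS, hTf]
      congr 1
      ext s
      by_cases h : z s = 0 <;> simp [Finsupp.filter_apply, h]
    have e2 : x - P z.support x = (x - S z) - P z.support (x - S z) := by
      rw [map_sub, e1]; abel
    rw [e2]
    calc _ ≤ ‖x - S z‖ + ‖P z.support (x - S z)‖ := norm_sub_le _ _
      _ ≤ ‖x - S z‖ + max M 1 * ‖x - S z‖ := by gcongr; exact hPb _ _
      _ = (1 + max M 1) * ‖x - S z‖ := by ring
      _ < (1 + max M 1) * (ε / (1 + max M 1)) := by gcongr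
      _ = ε := by field_simp

section
variable {X : Type*} [NormedAddCommGroup X] [NormedSpace ℝ X]
  {θ : Set (List ℕ)} {e : List ℕ → X} {M : ℝ} {P : Set (List ℕ) → X →L[ℝ] X}

theorem ProjSys.disj (h : ProjSys θ e M P) {A B : Set (List ℕ)} (hAB : Disjoint A B) (x : X) :
    P A (P B x) = 0 := by
  rw [h.comp, hAB.inter_eq, h.empty]

theorem geom_sum_le (s : Finset ℕ) : ∑ k ∈ s, ((1:ℝ) / 2) ^ (k + 1) ≤ 1 := by
  have := sum_le_hasSum s (fun i _ => by positivity) (hasSum_geometric_two' 1)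
  refine le_trans (le_of_eq ?_) this
  refine Finset.sum_congr rfl fun k _ => ?_
  rw [pow_succ, one_div_pow]
  field_simp

theorem ProjSys.pert (h : ProjSys θ e M P) (D : ℕ → Set (List ℕ))
    (hD : ∀ i j, i ≠ j → Disjoint (D i) (D j)) (w u : ℕ → X) (hu : ∀ k, P (D k) (u k) = u k)
    (a : ℝ) (ha : 0 < a) (hau : ∀ k, a ≤ ‖u k‖) (κ : ℝ) (hκ0 : 0 ≤ κ) (hκ : M / a * κ ≤ 1 / 2)
    (hw : ∀ k, ‖w k - u k‖ ≤ κ * (1 / 2) ^ (k + 1)) (s : Finset ℕ) (c : ℕ → ℝ) :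
    (∀ k ∈ s, |c k| ≤ M / a * ‖∑ i ∈ s, c i • u i‖) ∧
    ‖∑ i ∈ s, c i • w i - ∑ i ∈ s, c i • u i‖ ≤ 1 / 2 * ‖∑ i ∈ s, c i • u i‖ := by
  have hM := h.one_le
  have h1 : ∀ k ∈ s, |c k| ≤ M / a * ‖∑ i ∈ s, c i • u i‖ := by
    intro k hk
    have e1 : P (D k) (∑ i ∈ s, c i • u i) = c k • u k := by
      rw [map_sum, Finset.sum_eq_single_of_mem k hk]
      · rw [map_smul, hu]
      · intro j _ hj
        rw [map_smul, ← hu j, h.disj (hD k j hj.symm), smul_zero]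
    have h2 := h.bound (D k) (∑ i ∈ s, c i • u i)
    rw [e1, norm_smul, Real.norm_eq_abs] at h2
    rw [div_mul_eq_mul_div, le_div_iff₀ ha]
    exact (mul_le_mul_of_nonneg_left (hau k) (abs_nonneg _)).trans h2
  refine ⟨h1, ?_⟩
  set U := ‖∑ i ∈ s, c i • u i‖
  have hU : 0 ≤ U := norm_nonneg _
  rw [← Finset.sum_sub_distrib]
  calc _ ≤ ∑ i ∈ s, ‖c i • w i - c i • u i‖ := norm_sum_le _ _
    _ ≤ ∑ i ∈ s, (M / a * U) * (κ * (1 / 2) ^ (i + 1)) := by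
        refine Finset.sum_le_sum fun i hi => ?_
        rw [← smul_sub, norm_smul, Real.norm_eq_abs]
        exact mul_le_mul (h1 i hi) (hw i) (norm_nonneg _) (by positivity)
    _ = (M / a * κ) * U * ∑ i ∈ s, ((1:ℝ) / 2) ^ (i + 1) := by
        rw [Finset.mul_sum]; refine Finset.sum_congr rfl fun i _ => by ring
    _ ≤ (1 / 2) * U * 1 := by
        refine mul_le_mul ?_ (geom_sum_le s) (Finset.sum_nonneg fun i _ => by positivity)
          (by positivity)
        exact mul_le_mul_of_nonneg_right hκ hU
    _ = _ := by ring

theorem ProjSys.block_basic (h : ProjSys θ e M P) (D : ℕ → Set (List ℕ))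
    (hD : ∀ i j, i ≠ j → Disjoint (D i) (D j)) (u : ℕ → X) (hu : ∀ k, P (D k) (u k) = u k)
    (c : ℕ → ℝ) (n m : ℕ) (hnm : n ≤ m) :
    ‖∑ i ∈ Finset.range n, c i • u i‖ ≤ M * ‖∑ i ∈ Finset.range m, c i • u i‖ := by
  have := h.bound (⋃ i ∈ Finset.range n, D i) (∑ i ∈ Finset.range m, c i • u i)
  convert this using 2
  rw [map_sum, ← Finset.sum_subset (Finset.range_mono hnm)]
  · refine Finset.sum_congr rfl fun i hi => ?_
    rw [map_smul, ← hu i, h.comp, Set.inter_eq_right.2]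
    exact Set.subset_biUnion_of_mem (u := D) (Finset.mem_coe.2 hi)
  · intro i _ hi
    rw [map_smul, ← hu i, h.disj, smul_zero]
    simp only [Set.disjoint_iUnion_left]
    intro j hj
    exact hD j i (by rintro rfl; exact hi hj)

/-- one step of the gliding hump -/
theorem ProjSys.hump (h : ProjSys θ e M P) (σ : ℕ ≃ List ℕ) (B : ℕ → Set (List ℕ))
    (R : ℝ → X → Prop)
    (hR : ∀ n η, 0 < η → ∃ w, R η w ∧ ‖P (B n) w‖ < η) (η : ℕ → ℝ) (hη : ∀ k, 0 < η k) :
    ∃ (w : ℕ → X) (D : ℕ → Finset (List ℕ)) (n : ℕ → ℕ), Monotone n ∧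
      (∀ k, R (η k) (w k)) ∧ (∀ k, ∀ s ∈ D k, s ∉ B (n k) ∧ σ.symm s < n (k + 1)) ∧
      ∀ k, ‖w k - P (D k) (w k)‖ ≤ (1 + M) * η k := by
  classical
  have hM := h.one_le
  have step : ∀ n k : ℕ, ∃ q : X × Finset (List ℕ) × ℕ, n ≤ q.2.2 ∧ R (η k) q.1 ∧
      (∀ s ∈ q.2.1, s ∉ B n ∧ σ.symm s < q.2.2) ∧ ‖q.1 - P q.2.1 q.1‖ ≤ (1 + M) * η k := by
    intro n k
    obtain ⟨w, hw, hw2⟩ := hR n (η k) (hη k)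
    obtain ⟨G, hG⟩ := h.approx w (η k) (hη k)
    refine ⟨⟨w, G.filter (· ∉ B n), max n (G.sup (fun s => σ.symm s + 1))⟩, le_max_left _ _, hw,
      ?_, ?_⟩
    · intro s hs
      simp only [Finset.mem_filter] at hs
      refine ⟨hs.2, lt_of_lt_of_le (Nat.lt_succ_self _) (le_trans ?_ (le_max_right _ _))⟩
      exact Finset.le_sup (f := fun s => σ.symm s + 1) hs.1
    · have e1 : (G : Set (List ℕ)) = ((G.filter (· ∉ B n) : Finset _) : Set (List ℕ)) ∪
          ((G : Set (List ℕ)) ∩ B n) := by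
        ext s; simp; tauto
      have e2 := h.union ((G.filter (· ∉ B n) : Finset _) : Set (List ℕ))
          ((G : Set (List ℕ)) ∩ B n) w (by
            rw [Set.disjoint_left]; intro s hs hs2; simp at hs; exact hs.2 hs2.2)
      rw [← e1, ← h.comp] at e2
      have e3 : w - P ((G.filter (· ∉ B n) : Finset _) : Set (List ℕ)) w
          = (w - P G w) + P G (P (B n) w) := by rw [e2]; abel
      show ‖w - P ((G.filter (· ∉ B n) : Finset _) : Set (List ℕ)) w‖ ≤ _
      rw [e3]
      calc _ ≤ ‖w - P G w‖ + ‖P G (P (B n) w)‖ := norm_add_le _ _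
        _ ≤ η k + M * η k := by
            refine add_le_add hG.le ((h.bound _ _).trans ?_)
            exact mul_le_mul_of_nonneg_left hw2.le (by linarith)
        _ = _ := by ring
  choose q hq1 hq2 hq3 hq4 using step
  let n : ℕ → ℕ := fun k => Nat.rec 0 (fun k n => (q n k).2.2) k
  have hn : ∀ k, n (k + 1) = (q (n k) k).2.2 := fun k => rfl
  refine ⟨fun k => (q (n k) k).1, fun k => (q (n k) k).2.1, n,
    monotone_nat_of_le_succ fun k => ?_, fun k => hq2 _ _, fun k => ?_, fun k => hq4 _ _⟩
  · rw [hn]; exact hq1 _ _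
  · rw [hn]; exact hq3 _ _

/-- `A` is small when below every infinite dimensional subspace the projection is arbitrarily
small on an infinite dimensional subspace. -/
def SmallSet (P : Set (List ℕ) → X →L[ℝ] X) (Y : Submodule ℝ X) (A : Set (List ℕ)) : Prop :=
  ∀ Z ≤ Y, ¬ FiniteDimensional ℝ Z → ∀ ε : ℝ, 0 < ε →
    ∃ Z' ≤ Z, ¬ FiniteDimensional ℝ Z' ∧ ∀ z ∈ Z', ‖P A z‖ ≤ ε * ‖z‖

theorem ProjSys.inf_ker (h : ProjSys θ e M P) (F : Finset (List ℕ)) (Z : Submodule ℝ X)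
    (hZ : ¬ FiniteDimensional ℝ Z) :
    ¬ FiniteDimensional ℝ (Z ⊓ LinearMap.ker (P F : X →ₗ[ℝ] X) : Submodule ℝ X) := by
  classical
  intro hf
  apply hZ
  have : Z.FG := by
    refine Submodule.fg_of_fg_map_of_fg_inf_ker (P F : X →ₗ[ℝ] X) ?_ (Module.Finite.iff_fg.1 hf)
    have hsp : Z.map (P F : X →ₗ[ℝ] X) ≤ Submodule.span ℝ (F.image e : Finset X) := by
      rintro _ ⟨x, -, rfl⟩
      obtain ⟨z, hz, hz2⟩ := h.rep F x
      rw [ContinuousLinearMap.coe_coe, hz2]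
      refine Submodule.sum_mem _ fun s hs => Submodule.smul_mem _ _ (Submodule.subset_span ?_)
      have := (hz hs).1
      simp only [Finset.coe_image]
      exact ⟨s, this, rfl⟩
    have : FiniteDimensional ℝ (Submodule.span ℝ ((F.image e : Finset X) : Set X)) :=
      FiniteDimensional.span_finset ℝ _
    exact Module.Finite.iff_fg.1 (Submodule.finiteDimensional_of_le hsp)
  exact Module.Finite.iff_fg.2 this

theorem ProjSys.small_fin (h : ProjSys θ e M P) (Y : Submodule ℝ X) (F : Finset (List ℕ)) :
    SmallSet P Y F := by
  intro Z _ hZ ε hε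
  refine ⟨_, inf_le_left, h.inf_ker F Z hZ, ?_⟩
  intro z hz
  have : P F z = 0 := hz.2
  rw [this, norm_zero]
  positivity

theorem ProjSys.small_union (h : ProjSys θ e M P) (Y : Submodule ℝ X) {A B : Set (List ℕ)}
    (hA : SmallSet P Y A) (hB : SmallSet P Y B) : SmallSet P Y (A ∪ B) := by
  intro Z hZY hZ ε hε
  have hM := h.one_le
  obtain ⟨Z1, h1, h1i, h1b⟩ := hA Z hZY hZ (ε / 2) (by positivity)
  obtain ⟨Z2, h2, h2i, h2b⟩ := hB Z1 (h1.trans hZY) h1i (ε / (2 * M)) (by positivity)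
  refine ⟨Z2, h2.trans h1, h2i, fun z hz => ?_⟩
  have e1 : P (A ∪ B) z = P A z + P Aᶜ (P B z) := by
    rw [h.comp, ← h.union]
    · congr 2; ext s; simp; tauto
    · exact disjoint_compl_right.mono_right Set.inter_subset_left
  rw [e1]
  calc _ ≤ ‖P A z‖ + ‖P Aᶜ (P B z)‖ := norm_add_le _ _
    _ ≤ ε / 2 * ‖z‖ + M * (ε / (2 * M) * ‖z‖) := by
      refine add_le_add (h1b z (h2 hz)) ((h.bound _ _).trans ?_)
      exact mul_le_mul_of_nonneg_left (h2b z hz) (by linarith)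
    _ = ε * ‖z‖ := by field_simp; ring

theorem ProjSys.small_biUnion (h : ProjSys θ e M P) (Y : Submodule ℝ X)
    (A : ℕ → Set (List ℕ)) (hA : ∀ j, SmallSet P Y (A j)) (n : ℕ) :
    SmallSet P Y (⋃ j ∈ Finset.range n, A j) := by
  induction n with
  | zero => simpa using h.small_fin Y ∅
  | succ n ih =>
    rw [Finset.range_add_one, Finset.set_biUnion_insert]
    exact h.small_union Y (hA n) ih

theorem ProjSys.finIdx (σ : ℕ ≃ List ℕ) (n : ℕ) :
    {s | σ.symm s < n} = (((Finset.range n).map σ.toEmbedding : Finset _) : Set (List ℕ)) := by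
  ext s
  simp only [Set.mem_setOf_eq, Finset.coe_map, Set.mem_image, Finset.mem_coe, Finset.mem_range]
  constructor
  · intro hs; exact ⟨_, hs, by simp⟩
  · rintro ⟨j, hj, rfl⟩; simpa using hj

theorem ProjSys.not_small (h : ProjSys θ e M P) (σ : ℕ ≃ List ℕ) (Y : Submodule ℝ X)
    {A : Set (List ℕ)}
    (hA : ¬ SmallSet P Y A) : ∃ Z ≤ Y, ¬ FiniteDimensional ℝ Z ∧ ∃ δ : ℝ, 0 < δ ∧
      ∀ z ∈ Z, δ * ‖z‖ ≤ ‖P A z‖ := by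
  by_contra! hcon
  apply hA
  intro Z hZY hZ ε hε
  have hM := h.one_le
  let κ : ℝ := min (1 / (8 * M * (1 + M))) (ε / (8 * M))
  have hκ : 0 < κ := lt_min (by positivity) (by positivity)
  have hκ1 : κ * (1 + M) * M ≤ 1 / 8 := by
    have : κ ≤ 1 / (8 * M * (1 + M)) := min_le_left _ _
    rw [le_div_iff₀ (by positivity)] at this
    linarith
  have hκ2 : κ * M * 8 ≤ ε := by
    have : κ ≤ ε / (8 * M) := min_le_right _ _
    rw [le_div_iff₀ (by positivity)] at this
    linarith
  obtain ⟨w, D, n, hn, hR, hD, hwD⟩ := h.hump σ (fun n => {s | σ.symm s < n})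
    (fun η w => w ∈ Z ∧ ‖w‖ = 1 ∧ ‖P A w‖ ≤ η) (by
      intro n η hη
      rw [ProjSys.finIdx]
      obtain ⟨z, hz, hz2⟩ := hcon _ (inf_le_left.trans hZY) (h.inf_ker _ Z hZ) η hη
      have hz0 : z ≠ 0 := by rintro rfl; simp at hz2
      have hzn : 0 < ‖z‖ := norm_pos_iff.2 hz0
      refine ⟨‖z‖⁻¹ • z, ⟨Z.smul_mem _ hz.1, ?_, ?_⟩, ?_⟩
      · rw [norm_smul, norm_inv, norm_norm, inv_mul_cancel₀ hzn.ne']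
      · rw [map_smul, norm_smul, norm_inv, norm_norm, inv_mul_le_iff₀ hzn, mul_comm]
        exact hz2.le
      · have : P ((Finset.range n).map σ.toEmbedding : Finset _) z = 0 := hz.2
        rw [map_smul, this]; simpa using hη)
    (fun k => κ * (1 / 2) ^ (k + 1)) (fun k => by positivity)
  have hDd : ∀ i j, i ≠ j → Disjoint (D i : Set (List ℕ)) (D j) := by
    have : ∀ i j, i < j → Disjoint (D i : Set (List ℕ)) (D j) := by
      intro i j hij
      rw [Set.disjoint_left]
      intro s hs hs2
      exact (hD j s hs2).1 (lt_of_lt_of_le (hD i s hs).2 (hn hij))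
    intro i j hij
    rcases lt_or_gt_of_ne hij with h1 | h1
    · exact this i j h1
    · exact (this j i h1).symm
  have hu : ∀ k, P (D k) (P (D k) (w k)) = P (D k) (w k) := by
    intro k; rw [h.comp, Set.inter_self]
  have hpow : ∀ k : ℕ, ((1:ℝ) / 2) ^ (k + 1) ≤ 1 := fun k =>
    pow_le_one₀ (by norm_num) (by norm_num)
  have hau : ∀ k, 1 / 2 ≤ ‖P (D k) (w k)‖ := by
    intro k
    have h1 := norm_sub_norm_le (w k) (P (D k) (w k))
    have h2 := hwD k
    rw [(hR k).2.1] at h1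
    have h3 : (1 + M) * (κ * (1 / 2) ^ (k + 1)) ≤ 1 / 8 := by
      calc _ = (κ * (1 + M)) * (1 / 2) ^ (k + 1) := by ring
        _ ≤ (κ * (1 + M)) * 1 := by gcongr; exact hpow k
        _ = κ * (1 + M) * 1 := by ring
        _ ≤ κ * (1 + M) * M := by gcongr
        _ ≤ _ := hκ1
    linarith
  have key := h.pert (fun k => (D k : Set (List ℕ))) hDd w (fun k => P (D k) (w k)) hu (1 / 2)
    (by norm_num) hau (κ * (1 + M)) (by positivity) (by
      have : M / (1 / 2) * (κ * (1 + M)) = 2 * (κ * (1 + M) * M) := by ring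
      rw [this]; linarith) (fun k => (hwD k).trans (le_of_eq (by ring)))
  have key2 : ∀ (s : Finset ℕ) (c : ℕ → ℝ), ∀ k ∈ s, |c k| ≤ 4 * M * ‖∑ i ∈ s, c i • w i‖ := by
    intro s c k hk
    obtain ⟨k1, k2⟩ := key s c
    have k3 := norm_sub_norm_le (∑ i ∈ s, c i • P (D i) (w i)) (∑ i ∈ s, c i • w i)
    rw [norm_sub_rev] at k3
    refine (k1 k hk).trans ?_
    have : M / (1 / 2) = 2 * M := by ring
    rw [this]
    have : ‖∑ i ∈ s, c i • P (D i) (w i)‖ ≤ 2 * ‖∑ i ∈ s, c i • w i‖ := by linarith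
    calc _ ≤ 2 * M * (2 * ‖∑ i ∈ s, c i • w i‖) := by gcongr
      _ = _ := by ring
  refine ⟨Submodule.span ℝ (Set.range w), ?_, ?_, ?_⟩
  · rw [Submodule.span_le]
    rintro _ ⟨k, rfl⟩
    exact (hR k).1
  · intro hfd
    have hli : LinearIndependent ℝ w := by
      rw [linearIndependent_iff']
      intro s g hg i hi
      have := key2 s g i hi
      rw [hg, norm_zero, mul_zero] at this
      exact abs_nonpos_iff.1 this
    have := (linearIndependent_span hli).finite
    exact not_finite ℕ
  · intro z hz
    rw [Finsupp.mem_span_range_iff_exists_finsupp] at hz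
    obtain ⟨c, rfl⟩ := hz
    simp only [Finsupp.sum]
    set V := ‖∑ i ∈ c.support, c i • w i‖
    rw [map_sum]
    calc _ ≤ ∑ i ∈ c.support, ‖P A (c i • w i)‖ := norm_sum_le _ _
      _ ≤ ∑ i ∈ c.support, (4 * M * V) * (κ * (1 / 2) ^ (i + 1)) := by
        refine Finset.sum_le_sum fun i hi => ?_
        rw [map_smul, norm_smul, Real.norm_eq_abs]
        exact mul_le_mul (key2 _ c i hi) (hR i).2.2 (norm_nonneg _) (by positivity)
      _ = (4 * M * V * κ) * ∑ i ∈ c.support, ((1:ℝ) / 2) ^ (i + 1) := by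
        rw [Finset.mul_sum]; refine Finset.sum_congr rfl fun i _ => by ring
      _ ≤ (4 * M * V * κ) * 1 := by gcongr; exact geom_sum_le _
      _ = (κ * M * 4) * V := by ring
      _ ≤ ε * V := by
        gcongr
        have : 0 < κ * M := by positivity
        linarith

end

theorem exists_last_big {X : Type*} [NormedAddCommGroup X] [NormedSpace ℝ X]
    {θ : Set (List ℕ)} {e : List ℕ → X} {M : ℝ} {P : Set (List ℕ) → X →L[ℝ] X}
    (h : ProjSys θ e M P) (hθ : IsTree θ) (hWF : ¬ HasBranch θ)
    (Y : Submodule ℝ X) (hY : ¬ FiniteDimensional ℝ Y) :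
    ∃ s, ¬ SmallSet P Y {t | s <+: t} ∧ ∀ i, SmallSet P Y {t | s ++ [i] <+: t} := by
  by_contra! hcon
  apply hWF
  choose! f hf using hcon
  let g : ℕ → List ℕ := fun n => Nat.rec [] (fun _ s => s ++ [f s]) n
  have hg : ∀ n, g (n + 1) = g n ++ [f (g n)] := fun n => rfl
  have hbig : ∀ n, ¬ SmallSet P Y {t | g n <+: t} := by
    intro n
    induction n with
    | zero =>
      intro hs
      obtain ⟨Z, -, hZ, hb⟩ := hs Y le_rfl hY (1 / 2) (by norm_num)
      apply hZ
      have : Z = ⊥ := by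
        rw [Submodule.eq_bot_iff]
        intro z hz
        have := hb z hz
        have e1 : {t : List ℕ | g 0 <+: t} = Set.univ := by
          ext t; simp [g]
        rw [e1, h.univ] at this
        have := norm_nonneg z
        exact norm_eq_zero.1 (by linarith)
      rw [this]
      infer_instance
    | succ n ih => rw [hg]; exact hf _ ih
  refine ⟨fun n => f (g n), fun n => ?_⟩
  have e1 : (List.range n).map (fun n => f (g n)) = g n := by
    induction n with
    | zero => rfl
    | succ n ih => rw [List.range_succ, List.map_append, ih, hg]; rfl
  rw [e1]
  by_contra hn
  apply hbig n
  have e2 : ∀ x, P {t | g n <+: t} x = 0 := by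
    intro x
    rw [← h.theta x]
    apply h.disj
    rw [Set.disjoint_left]
    intro t ht ht2
    exact hn (hθ t ht2 _ ht)
  intro Z _ hZ ε hε
  refine ⟨Z, le_rfl, hZ, fun z _ => ?_⟩
  rw [e2, norm_zero]; positivity

/-- if `θ` is a well-founded tree, `X` a Banach space with an unconditional
basis `(e_s)_{s∈θ}` indexed by `θ` (with respect to a fixed compatible enumeration), and
`Y ⊆ X` an infinite-dimensional closed subspace, then `Y` contains a basic sequence `(y_k)`
equivalent to a semi-normalized block sequence `(x_k)` of `(e_s)` whose supports are pairwise
completely incomparable subsets of `θ`. -/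
theorem subspace_contains_seq_equiv_incomparable_block
    {X : Type*} [NormedAddCommGroup X] [NormedSpace ℝ X] [CompleteSpace X]
    (θ : Set (List ℕ)) (hθ : IsTree θ) (hWF : ¬ HasBranch θ)
    (σ : ℕ ≃ List ℕ) (hσ : CompatibleEnum σ)
    (e : List ℕ → X) (he0 : ∀ s ∈ θ, e s ≠ 0)
    (hdense : DenseRange fun z : {z : List ℕ →₀ ℝ // ↑z.support ⊆ θ} =>
      ∑ s ∈ (z : List ℕ →₀ ℝ).support, (z : List ℕ →₀ ℝ) s • e s)
    (huncond : ∃ M : ℝ, 0 < M ∧ ∀ z : List ℕ →₀ ℝ, ↑z.support ⊆ θ →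
      ∀ F : Finset (List ℕ),
        ‖∑ s ∈ z.support ∩ F, z s • e s‖ ≤ M * ‖∑ s ∈ z.support, z s • e s‖)
    (Y : Submodule ℝ X) (hYc : IsClosed (Y : Set X)) (hYinf : ¬ FiniteDimensional ℝ Y) :
    ∃ (y : ℕ → X) (x : ℕ → (List ℕ →₀ ℝ)),
      (∀ k, y k ∈ Y) ∧ IsBasicSeq y ∧
      (∀ k, ↑(x k).support ⊆ θ) ∧
      (∀ k, ∀ s ∈ (x k).support, ∀ t ∈ (x (k + 1)).support, σ.symm s < σ.symm t) ∧
      (∀ k l, k ≠ l → CompIncomp ↑(x k).support ↑(x l).support) ∧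
      (∃ a b : ℝ, 0 < a ∧ ∀ k,
        a ≤ ‖∑ s ∈ (x k).support, x k s • e s‖ ∧ ‖∑ s ∈ (x k).support, x k s • e s‖ ≤ b) ∧
      (∃ C : ℝ, 1 ≤ C ∧ ∀ (n : ℕ) (c : ℕ → ℝ),
        C⁻¹ * ‖∑ k ∈ Finset.range n, c k • ∑ s ∈ (x k).support, x k s • e s‖ ≤
            ‖∑ k ∈ Finset.range n, c k • y k‖ ∧
        ‖∑ k ∈ Finset.range n, c k • y k‖ ≤
            C * ‖∑ k ∈ Finset.range n, c k • ∑ s ∈ (x k).support, x k s • e s‖) := by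
  classical
  obtain ⟨M, P, h⟩ := exists_projSys θ e hdense huncond
  have hM := h.one_le
  obtain ⟨s, hs, hsc⟩ := exists_last_big h hθ hWF Y hYinf
  obtain ⟨Z, hZY, hZ, δ, hδ, hb⟩ := h.not_small σ Y hs
  let C : Set (List ℕ) := {t | s <+: t}
  let Q : ℕ → Set (List ℕ) := fun j => {t | s ++ [(σ j).getD s.length 0] <+: t}
  let B : ℕ → Set (List ℕ) := fun n =>
    ({t | σ.symm t < n} ∪ (({s} : Finset (List ℕ)) : Set (List ℕ))) ∪ ⋃ j ∈ Finset.range n, Q j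
  have hB : ∀ n, SmallSet P Y (B n) := by
    intro n
    refine h.small_union Y (h.small_union Y ?_ (h.small_fin Y _))
      (h.small_biUnion Y Q (fun j => hsc _) n)
    rw [ProjSys.finIdx]
    exact h.small_fin Y _
  let κ : ℝ := δ / (8 * M * (1 + M))
  have hκ : 0 < κ := by positivity
  have hκ1 : κ * (1 + M) * M = δ / 8 := by
    simp only [κ]; field_simp
  obtain ⟨w, D, n, hn, hR, hD, hwD⟩ := h.hump σ B
    (fun _ w => ∃ y ∈ Z, ‖y‖ = 1 ∧ w = P C y) (by
      intro n η hη
      obtain ⟨Z', hZ', hi, hZb⟩ := hB n Z hZY hZ (η / (2 * M)) (by positivity)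
      have : ∃ z ∈ Z', z ≠ 0 := by
        by_contra! hcon
        apply hi
        rw [(Submodule.eq_bot_iff Z').2 hcon]
        infer_instance
      obtain ⟨z, hz, hz0⟩ := this
      have hzn : 0 < ‖z‖ := norm_pos_iff.2 hz0
      have hn1 : ‖‖z‖⁻¹ • z‖ = 1 := by
        rw [norm_smul, norm_inv, norm_norm, inv_mul_cancel₀ hzn.ne']
      refine ⟨P C (‖z‖⁻¹ • z), ⟨_, Z.smul_mem _ (hZ' hz), hn1, rfl⟩, ?_⟩
      rw [h.comp, Set.inter_comm, ← h.comp]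
      have h1 := hZb _ (Z'.smul_mem ‖z‖⁻¹ hz)
      rw [hn1, mul_one] at h1
      calc _ ≤ M * ‖P (B n) (‖z‖⁻¹ • z)‖ := h.bound _ _
        _ ≤ M * (η / (2 * M)) := by gcongr
        _ = η / 2 := by field_simp
        _ < η := by linarith)
    (fun k => κ * (1 / 2) ^ (k + 1)) (fun k => by positivity)
  choose y hyZ hy1 hwy using hR
  let D' : ℕ → Finset (List ℕ) := fun k => (D k).filter (· ∈ C ∩ θ)
  have hD'w : ∀ k, P (D' k) (w k) = P (D k) (w k) := by
    intro k
    have e1 : ((D' k : Finset _) : Set (List ℕ)) = (D k : Set (List ℕ)) ∩ (C ∩ θ) := by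
      ext t; simp [D']
    have e2 : P (C ∩ θ) (w k) = w k := by
      rw [← h.comp, h.theta, hwy, h.comp, Set.inter_self]
    rw [e1, ← h.comp, e2]
  have hD' : ∀ k, ∀ t ∈ D' k, t ∈ D k ∧ s <+: t ∧ t ∈ θ := by
    intro k t ht
    simp only [D', Finset.mem_filter] at ht
    exact ⟨ht.1, ht.2.1, ht.2.2⟩
  have hwD' : ∀ k, ‖w k - P (D' k) (w k)‖ ≤ κ * (1 + M) * (1 / 2) ^ (k + 1) := by
    intro k; rw [hD'w]; exact (hwD k).trans (le_of_eq (by ring))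
  have horder : ∀ j k, j < k → ∀ a ∈ D' j, ∀ b ∈ D' k, σ.symm a < σ.symm b := by
    intro j k hjk a ha b hb
    have h1 := (hD j a (hD' j a ha).1).2
    have h2 := (hD k b (hD' k b hb).1).1
    have h3 : ¬ σ.symm b < n k := fun h => h2 (Or.inl (Or.inl h))
    have h4 : n (j + 1) ≤ n k := hn hjk
    omega
  have hinc : ∀ j k, j < k → ∀ a ∈ D' j, ∀ b ∈ D' k, ¬ TreeComparable a b := by
    intro j k hjk a ha b hb hab
    have h1 := (hD j a (hD' j a ha).1)
    have h2 := (hD k b (hD' k b hb).1).1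
    obtain ⟨ra, rfl⟩ := (hD' j a ha).2.1
    obtain ⟨rb, rfl⟩ := (hD' k b hb).2.1
    have h4 : n (j + 1) ≤ n k := hn hjk
    have ha0 : ra ≠ [] := by
      rintro rfl; exact h1.1 (Or.inl (Or.inr (by simp)))
    have hb0 : rb ≠ [] := by
      rintro rfl; exact h2 (Or.inl (Or.inr (by simp)))
    obtain ⟨i, ra, rfl⟩ := List.exists_cons_of_ne_nil ha0
    obtain ⟨i', rb, rfl⟩ := List.exists_cons_of_ne_nil hb0
    have hii : i = i' := by
      rcases hab with hab | hab
      · rw [List.prefix_append_right_inj, List.cons_prefix_cons] at hab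
        exact hab.1
      · rw [List.prefix_append_right_inj, List.cons_prefix_cons] at hab
        exact hab.1.symm
    subst hii
    apply h2
    refine Or.inr ?_
    simp only [Set.mem_iUnion, Finset.mem_range]
    refine ⟨σ.symm (s ++ i :: ra), lt_of_lt_of_le h1.2 h4, ?_⟩
    simp [Q, List.prefix_append_right_inj]
  have hDd : ∀ i j, i ≠ j → Disjoint (D' i : Set (List ℕ)) (D' j) := by
    intro i j hij
    rw [Set.disjoint_left]
    intro t h1 h2
    rcases lt_or_gt_of_ne hij with h3 | h3
    · exact lt_irrefl _ (horder i j h3 t h1 t h2)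
    · exact lt_irrefl _ (horder j i h3 t h2 t h1)
  have hw1 : ∀ k, δ ≤ ‖w k‖ := by
    intro k
    have := hb _ (hyZ k)
    rw [hy1, mul_one] at this
    rw [hwy]; exact this
  have hw2 : ∀ k, ‖w k‖ ≤ M := by
    intro k
    have := h.bound C (y k)
    rwa [hy1, mul_one, ← hwy] at this
  have hpow : ∀ k : ℕ, ((1:ℝ) / 2) ^ (k + 1) ≤ 1 := fun k =>
    pow_le_one₀ (by norm_num) (by norm_num)
  have hau : ∀ k, δ / 2 ≤ ‖P (D' k) (w k)‖ := by
    intro k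
    have h1 := norm_sub_norm_le (w k) (P (D' k) (w k))
    have h3 : κ * (1 + M) * (1 / 2) ^ (k + 1) ≤ δ / 8 := by
      calc _ ≤ (κ * (1 + M)) * 1 := by gcongr; exact hpow k
        _ ≤ κ * (1 + M) * M := by gcongr
        _ = _ := hκ1
    linarith [hw1 k, hwD' k]
  have hu : ∀ k, P (D' k) (P (D' k) (w k)) = P (D' k) (w k) := by
    intro k; rw [h.comp, Set.inter_self]
  have key := h.pert (fun k => (D' k : Set (List ℕ))) hDd w (fun k => P (D' k) (w k)) hu (δ / 2)
    (by positivity) hau (κ * (1 + M)) (by positivity) (by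
      have : M / (δ / 2) * (κ * (1 + M)) = 2 * (κ * (1 + M) * M) / δ := by field_simp
      rw [this, hκ1]
      have : 2 * (δ / 8) / δ = 1 / 4 := by field_simp; norm_num
      rw [this]; norm_num) hwD'
  choose x hx1 hx2 using fun k => h.rep (D' k) (w k)
  have hxu := h.block_basic (fun k => (D' k : Set (List ℕ))) hDd (fun k => P (D' k) (w k)) hu
  have hPy : ∀ (c : ℕ → ℝ) (m : ℕ), P C (∑ k ∈ Finset.range m, c k • y k) =
      ∑ k ∈ Finset.range m, c k • w k := by
    intro c m
    rw [map_sum]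
    exact Finset.sum_congr rfl fun k _ => by rw [map_smul, hwy]
  have eq1 : ∀ (c : ℕ → ℝ) (m : ℕ), ‖∑ k ∈ Finset.range m, c k • P (D' k) (w k)‖ ≤
      2 * M * ‖∑ k ∈ Finset.range m, c k • y k‖ := by
    intro c m
    have k2 := (key (Finset.range m) c).2
    have k3 := norm_sub_norm_le (∑ i ∈ Finset.range m, c i • P (D' i) (w i))
      (∑ i ∈ Finset.range m, c i • w i)
    rw [norm_sub_rev] at k3
    have k4 := h.bound C (∑ k ∈ Finset.range m, c k • y k)
    rw [hPy] at k4
    linarith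
  have eq2 : ∀ (c : ℕ → ℝ) (m : ℕ), ‖∑ k ∈ Finset.range m, c k • y k‖ ≤
      2 / δ * ‖∑ k ∈ Finset.range m, c k • P (D' k) (w k)‖ := by
    intro c m
    have k2 := (key (Finset.range m) c).2
    have k3 := norm_sub_norm_le (∑ i ∈ Finset.range m, c i • w i)
      (∑ i ∈ Finset.range m, c i • P (D' i) (w i))
    have k4 := hb (∑ k ∈ Finset.range m, c k • y k)
      (Z.sum_mem fun k _ => Z.smul_mem _ (hyZ k))
    have e1 : P {t | s <+: t} (∑ k ∈ Finset.range m, c k • y k) =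
      ∑ k ∈ Finset.range m, c k • w k := hPy c m
    rw [e1] at k4
    rw [div_mul_eq_mul_div, le_div_iff₀ hδ]
    have := norm_nonneg (∑ i ∈ Finset.range m, c i • P (D' i) (w i))
    linarith
  refine ⟨y, x, fun k => hZY (hyZ k), ⟨fun k h0 => ?_, 2 / δ * (M * (2 * M)), by positivity, ?_⟩,
    fun k => (hx1 k).trans Set.inter_subset_right, ?_, ?_, ⟨δ / 2, M * M, by positivity, ?_⟩,
    max (2 * M) (2 / δ), le_max_of_le_left (by linarith), ?_⟩
  · have := hy1 k
    rw [h0, norm_zero] at this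
    norm_num at this
  · intro c p q hpq
    calc _ ≤ 2 / δ * ‖∑ k ∈ Finset.range p, c k • P (D' k) (w k)‖ := eq2 c p
      _ ≤ 2 / δ * (M * ‖∑ k ∈ Finset.range q, c k • P (D' k) (w k)‖) := by
        gcongr; exact hxu c p q hpq
      _ ≤ 2 / δ * (M * (2 * M * ‖∑ k ∈ Finset.range q, c k • y k‖)) := by
        gcongr; exact eq1 c q
      _ = _ := by ring
  · intro k a ha b hb
    exact horder k (k + 1) (Nat.lt_succ_self k) a (hx1 k ha).1 b (hx1 (k + 1) hb).1
  · intro j k hjk a ha b hb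
    rcases lt_or_gt_of_ne hjk with h3 | h3
    · exact hinc j k h3 a (hx1 j ha).1 b (hx1 k hb).1
    · exact fun hab => hinc k j h3 b (hx1 k hb).1 a (hx1 j ha).1 hab.symm
  · intro k
    rw [← hx2]
    refine ⟨hau k, (h.bound _ _).trans ?_⟩
    gcongr
    exact hw2 k
  · intro m c
    simp only [← hx2]
    constructor
    · rw [inv_mul_le_iff₀ (lt_max_of_lt_left (by linarith))]
      exact (eq1 c m).trans (by gcongr; exact le_max_left _ _)
    · exact (eq2 c m).trans (by gcongr; exact le_max_right _ _)
end

section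
/- Let X be a Banach space with an unconditional basis (xₖ) that is strongly asymptotic ℓ¹, and suppose X is crudely finitely representable in ℓ¹. Then X contains an isomorphic copy of ℓ¹. Consequently, no subspace of Tsirelson space generated by a subsequence of its standard basis embeds uniformly into all of its own tail subspaces. -/
/-- `Z` `K`-embeds into `W`. -/
def Embeds (K : ℝ) (Z W : Type*) [NormedAddCommGroup Z] [NormedSpace ℝ Z]
    [NormedAddCommGroup W] [NormedSpace ℝ W] : Prop :=
  ∃ T : Z →L[ℝ] W, ∀ z : Z, ‖z‖ ≤ ‖T z‖ ∧ ‖T z‖ ≤ K * ‖z‖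

/-- The basis `(xₖ)` of `X` is unconditional (suppression unconditional with constant `M`). -/
def IsUncondBasis {X : Type*} [NormedAddCommGroup X] [NormedSpace ℝ X] (x : ℕ → X) : Prop :=
  ∃ M : ℝ, 1 ≤ M ∧ ∀ (a : ℕ →₀ ℝ) (F : Finset ℕ),
    ‖∑ k ∈ a.support ∩ F, a k • x k‖ ≤ M * ‖∑ k ∈ a.support, a k • x k‖

/-- The basis `(xₖ)` is strongly asymptotic `ℓ¹` : there are `f : ℕ → ℕ` and `C > 0` such
that any `m` disjointly supported unit vectors in `span{xₖ : k ≥ f(m)}` are `C`-equivalent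
to the unit vector basis of `ℓ¹ₘ`. -/
def StronglyAsymptoticL1 {X : Type*} [NormedAddCommGroup X] [NormedSpace ℝ X]
    (x : ℕ → X) : Prop :=
  ∃ (f : ℕ → ℕ) (C : ℝ), 1 ≤ C ∧ ∀ (m : ℕ) (v : Fin m → X) (S : Fin m → Finset ℕ),
    (∀ i, ‖v i‖ = 1) → (∀ i, v i ∈ Submodule.span ℝ (x '' ↑(S i))) →
    (∀ i, ∀ k ∈ S i, f m ≤ k) → (∀ i j : Fin m, i ≠ j → Disjoint (S i) (S j)) →
    ∀ a : Fin m → ℝ,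
      C⁻¹ * ∑ i, |a i| ≤ ‖∑ i, a i • v i‖ ∧ ‖∑ i, a i • v i‖ ≤ C * ∑ i, |a i|

/-- `X` contains an isomorphic copy of `ℓ¹`. -/
def ContainsL1 (X : Type*) [NormedAddCommGroup X] [NormedSpace ℝ X] : Prop :=
  ∃ T : lp (fun _ : ℕ => ℝ) 1 →L[ℝ] X, ∃ c : ℝ, 0 < c ∧
    ∀ a : lp (fun _ : ℕ => ℝ) 1, c * ‖a‖ ≤ ‖T a‖

/-- `X` is crudely finitely representable in `ℓ¹`. -/
def CrudelyFinRepL1 (X : Type*) [NormedAddCommGroup X] [NormedSpace ℝ X] : Prop :=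
  ∃ M : ℝ, 0 < M ∧ ∀ F : Submodule ℝ X, FiniteDimensional ℝ F →
    Embeds M ↥F (lp (fun _ : ℕ => ℝ) 1)


/-- multiplier form of unconditionality -/
def Unc {X : Type*} [NormedAddCommGroup X] [NormedSpace ℝ X] (y : ℕ → X) (U : ℝ) : Prop :=
  ∀ (s : Finset ℕ) (a b : ℕ → ℝ), (∀ k ∈ s, |b k| ≤ |a k|) →
    ‖∑ k ∈ s, b k • y k‖ ≤ U * ‖∑ k ∈ s, a k • y k‖

theorem unc_of_basis {X : Type*} [NormedAddCommGroup X] [NormedSpace ℝ X] (x : ℕ → X)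
    (hu : IsUncondBasis x) : ∃ U : ℝ, 1 ≤ U ∧ Unc x U := by
  obtain ⟨M, hM, h⟩ := hu
  have h1 : ∀ (s : Finset ℕ) (a : ℕ → ℝ) (F : Finset ℕ), F ⊆ s →
      ‖∑ k ∈ F, a k • x k‖ ≤ M * ‖∑ k ∈ s, a k • x k‖ := by
    intro s a F hF
    let a' : ℕ →₀ ℝ := Finsupp.onFinset s (fun k => if k ∈ s then a k else 0)
      (by intro k hk; by_contra hk2; simp [hk2] at hk)
    have hval : ∀ k ∈ s, a' k = a k := by intro k hk; simp [a', hk]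
    have h2 := h a' F
    have e1 : ∑ k ∈ a'.support, a' k • x k = ∑ k ∈ s, a k • x k := by
      rw [Finset.sum_subset (s₂ := s)]
      · exact Finset.sum_congr rfl fun k hk => by rw [hval k hk]
      · exact Finsupp.support_onFinset_subset
      · intro k _ hk; simp [Finsupp.notMem_support_iff.mp hk]
    have e2 : ∑ k ∈ a'.support ∩ F, a' k • x k = ∑ k ∈ F, a k • x k := by
      rw [Finset.sum_subset (s₂ := F) Finset.inter_subset_right]
      · exact Finset.sum_congr rfl fun k hk => by rw [hval k (hF hk)]
      · intro k hk1 hk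
        have : k ∉ a'.support := fun h => hk (Finset.mem_inter.mpr ⟨h, hk1⟩)
        simp [Finsupp.notMem_support_iff.mp this]
    rwa [e1, e2] at h2
  refine ⟨2 * M, by linarith, ?_⟩
  intro s a b hab
  obtain ⟨φ, hφ, hφ2⟩ := exists_dual_vector'' ℝ (∑ k ∈ s, b k • x k)
  have hφ3 : ∀ v, |φ v| ≤ ‖v‖ := fun v => by
    have := φ.le_opNorm v
    rw [Real.norm_eq_abs] at this
    nlinarith [norm_nonneg v]
  have hφ2' : ‖∑ k ∈ s, b k • x k‖ = ∑ k ∈ s, b k * φ (x k) := by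
    have : φ (∑ k ∈ s, b k • x k) = ∑ k ∈ s, b k * φ (x k) := by simp
    rw [← this, hφ2]; simp
  rw [hφ2']
  set V := ‖∑ k ∈ s, a k • x k‖
  have key : ∑ k ∈ s, |a k * φ (x k)| ≤ 2 * M * V := by
    rw [← Finset.sum_filter_add_sum_filter_not s (fun k => 0 ≤ a k * φ (x k))]
    have p1 : ∑ k ∈ s with 0 ≤ a k * φ (x k), |a k * φ (x k)| ≤ M * V := by
      calc _ = φ (∑ k ∈ s with 0 ≤ a k * φ (x k), a k • x k) := by
            simp only [map_sum, map_smul, smul_eq_mul]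
            exact Finset.sum_congr rfl fun k hk => abs_of_nonneg (Finset.mem_filter.mp hk).2
        _ ≤ _ := (le_abs_self _).trans ((hφ3 _).trans (h1 _ _ _ (Finset.filter_subset _ _)))
    have p2 : ∑ k ∈ s with ¬ 0 ≤ a k * φ (x k), |a k * φ (x k)| ≤ M * V := by
      calc _ = - φ (∑ k ∈ s with ¬ 0 ≤ a k * φ (x k), a k • x k) := by
            simp only [map_sum, map_smul, smul_eq_mul, ← Finset.sum_neg_distrib]
            exact Finset.sum_congr rfl fun k hk =>
              abs_of_neg (not_le.mp (Finset.mem_filter.mp hk).2)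
        _ ≤ _ := (neg_le_abs _).trans ((hφ3 _).trans (h1 _ _ _ (Finset.filter_subset _ _)))
    linarith
  refine le_trans (Finset.sum_le_sum fun k hk => ?_) key
  rw [abs_mul]
  refine (le_abs_self _).trans ?_
  rw [abs_mul]
  exact mul_le_mul_of_nonneg_right (hab k hk) (abs_nonneg _)

theorem Unc.normalize {X : Type*} [NormedAddCommGroup X] [NormedSpace ℝ X] {x : ℕ → X} {U : ℝ}
    (h : Unc x U) (r : ℕ → ℝ) : Unc (fun k => r k • x k) U := by
  intro s a b hab
  simp only [smul_smul]
  refine h s (fun k => a k * r k) (fun k => b k * r k) fun k hk => ?_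
  simp only [abs_mul]
  exact mul_le_mul_of_nonneg_right (hab k hk) (abs_nonneg _)

theorem extend_sum {E : Type*} [AddCommMonoid E] [Module ℝ E] {φ : ℕ → ℕ}
    (hφ : Function.Injective φ) (s : Finset ℕ) (a : ℕ → ℝ) (y : ℕ → E) :
    ∑ k ∈ s, a k • y (φ k) = ∑ i ∈ s.map ⟨φ, hφ⟩, Function.extend φ a 0 i • y i := by
  rw [Finset.sum_map]
  exact Finset.sum_congr rfl fun k _ => by simp [hφ.extend_apply]

theorem Unc.comp {X : Type*} [NormedAddCommGroup X] [NormedSpace ℝ X] {x : ℕ → X} {U : ℝ}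
    (h : Unc x U) {φ : ℕ → ℕ} (hφ : Function.Injective φ) : Unc (fun k => x (φ k)) U := by
  intro s a b hab
  rw [extend_sum hφ s a x, extend_sum hφ s b x]
  refine h _ _ _ fun i hi => ?_
  obtain ⟨k, hk, rfl⟩ := Finset.mem_map.mp hi
  simpa [hφ.extend_apply] using hab k hk

/-- signs -/
def sg (p : Finset ℕ) (i : ℕ) : ℝ := if i ∈ p then 1 else -1

theorem abs_sg (p : Finset ℕ) (i : ℕ) : |sg p i| = 1 := by
  unfold sg; split_ifs <;> simp

theorem sg_sum_insert {s p : Finset ℕ} {k : ℕ} (hk : k ∉ s) (hp : p ⊆ s) (c : ℕ → ℝ) :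
    (∑ i ∈ insert k s, sg p i * c i = - c k + ∑ i ∈ s, sg p i * c i) ∧
    (∑ i ∈ insert k s, sg (insert k p) i * c i = c k + ∑ i ∈ s, sg p i * c i) := by
  have hkp : k ∉ p := fun h => hk (hp h)
  constructor
  · rw [Finset.sum_insert hk]; simp [sg, hkp]
  · rw [Finset.sum_insert hk]
    congr 1
    · simp [sg]
    · refine Finset.sum_congr rfl fun i hi => ?_
      have : i ≠ k := fun h => hk (h ▸ hi)
      simp [sg, this]

theorem sg_lower (s : Finset ℕ) (c : ℕ → ℝ) {k : ℕ} (hk : k ∈ s) :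
    2 ^ s.card * |c k| ≤ ∑ p ∈ s.powerset, |∑ i ∈ s, sg p i * c i| := by
  obtain ⟨s', hs', rfl⟩ : ∃ s', k ∉ s' ∧ insert k s' = s :=
    ⟨s.erase k, by simp, Finset.insert_erase hk⟩
  rw [Finset.sum_powerset_insert hs', ← Finset.sum_add_distrib, Finset.card_insert_of_notMem hs']
  calc _ = ∑ p ∈ s'.powerset, 2 * |c k| := by
        rw [Finset.sum_const, Finset.card_powerset, nsmul_eq_mul]; push_cast; ring
    _ ≤ _ := by
        refine Finset.sum_le_sum fun p hp => ?_
        obtain ⟨h1, h2⟩ := sg_sum_insert hs' (Finset.mem_powerset.mp hp) c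
        rw [h1, h2]
        set z := ∑ i ∈ s', sg p i * c i
        have := abs_sub (c k + z) (-c k + z)
        rw [show c k + z - (-c k + z) = 2 * c k by ring, abs_mul] at this
        simp at this
        linarith

theorem sg_sq (s : Finset ℕ) (c : ℕ → ℝ) :
    ∑ p ∈ s.powerset, (∑ i ∈ s, sg p i * c i) ^ 2 = 2 ^ s.card * ∑ i ∈ s, c i ^ 2 := by
  induction s using Finset.induction_on with
  | empty => simp
  | insert k s hk ih =>
    rw [Finset.sum_powerset_insert hk, ← Finset.sum_add_distrib, Finset.card_insert_of_notMem hk,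
      Finset.sum_insert hk]
    have : ∀ p ∈ s.powerset, (∑ i ∈ insert k s, sg p i * c i) ^ 2 +
        (∑ i ∈ insert k s, sg (insert k p) i * c i) ^ 2
        = 2 * c k ^ 2 + 2 * (∑ i ∈ s, sg p i * c i) ^ 2 := by
      intro p hp
      obtain ⟨h1, h2⟩ := sg_sum_insert hk (Finset.mem_powerset.mp hp) c
      rw [h1, h2]; ring
    rw [Finset.sum_congr rfl this, Finset.sum_add_distrib, ← Finset.mul_sum, ← Finset.mul_sum, ih,
      Finset.sum_const, Finset.card_powerset, nsmul_eq_mul]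
    push_cast; ring

theorem sg_upper (s : Finset ℕ) (c : ℕ → ℝ) (D : ℝ) (r : ℕ) (hr : s.card = r ^ 2) (hD : 0 ≤ D)
    (hc : ∀ i ∈ s, |c i| ≤ D) :
    ∑ p ∈ s.powerset, |∑ i ∈ s, sg p i * c i| ≤ 2 ^ s.card * (r * D) := by
  refine abs_le_of_sq_le_sq' ?_ (by positivity) |>.2
  refine (sq_sum_le_card_mul_sum_sq).trans ?_
  simp only [sq_abs]
  rw [sg_sq, Finset.card_powerset]
  have : ∑ i ∈ s, c i ^ 2 ≤ r ^ 2 * D ^ 2 := by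
    calc _ ≤ ∑ i ∈ s, D ^ 2 := Finset.sum_le_sum fun i hi => by
            rw [← sq_abs]; exact pow_le_pow_left₀ (abs_nonneg _) (hc i hi) 2
      _ = _ := by rw [Finset.sum_const, hr, nsmul_eq_mul]; push_cast; ring
  push_cast
  calc (2:ℝ) ^ s.card * (2 ^ s.card * ∑ i ∈ s, c i ^ 2)
      ≤ 2 ^ s.card * (2 ^ s.card * (r ^ 2 * D ^ 2)) := by gcongr
    _ = _ := by ring

/-- approximate representability of the sequence `y` in finite dimensional `ℓ¹` spaces -/
def L1Rep {X : Type*} [NormedAddCommGroup X] [NormedSpace ℝ X] (y : ℕ → X) (M : ℝ) : Prop :=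
  ∀ (n : ℕ) (δ : ℝ), 0 < δ → ∃ (ι : Type) (Ω : Finset ι) (t : ℕ → ι → ℝ),
    ∀ s : Finset ℕ, s ⊆ Finset.range n → ∀ a : ℕ → ℝ,
      ‖∑ i ∈ s, a i • y i‖ ≤ M * ∑ ω ∈ Ω, |∑ i ∈ s, a i * t i ω| + δ * ∑ i ∈ s, |a i| ∧
      ∑ ω ∈ Ω, |∑ i ∈ s, a i * t i ω| ≤ M * ‖∑ i ∈ s, a i • y i‖

/-- data of one stage: the density -/
noncomputable def dens {ι : Type} (n : ℕ) (t : ℕ → ι → ℝ) (ω : ι) : ℝ :=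
  ∑ i ∈ Finset.range n, (1 / 2 : ℝ) ^ i * |t i ω|

theorem dens_nonneg {ι : Type} (n : ℕ) (t : ℕ → ι → ℝ) (ω : ι) : 0 ≤ dens n t ω :=
  Finset.sum_nonneg fun i _ => by positivity

theorem le_dens {ι : Type} {n i : ℕ} (hi : i < n) (t : ℕ → ι → ℝ) (ω : ι) :
    |t i ω| ≤ 2 ^ i * dens n t ω := by
  have : (1 / 2 : ℝ) ^ i * |t i ω| ≤ dens n t ω :=
    Finset.single_le_sum (f := fun i => (1 / 2 : ℝ) ^ i * |t i ω|) (fun i _ => by positivity)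
      (Finset.mem_range.mpr hi)
  calc |t i ω| = 2 ^ i * ((1 / 2 : ℝ) ^ i * |t i ω|) := by
        rw [← mul_assoc, ← mul_pow]; norm_num
    _ ≤ _ := by gcongr

theorem sum_dens_le {ι : Type} {n : ℕ} {t : ℕ → ι → ℝ} {Ω : Finset ι} {M : ℝ} (hM : 0 ≤ M)
    (h : ∀ i < n, ∑ ω ∈ Ω, |t i ω| ≤ M) : ∑ ω ∈ Ω, dens n t ω ≤ 2 * M := by
  unfold dens
  rw [Finset.sum_comm]
  calc _ ≤ ∑ i ∈ Finset.range n, (1 / 2 : ℝ) ^ i * M := by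
        refine Finset.sum_le_sum fun i hi => ?_
        rw [← Finset.mul_sum]
        have := h i (Finset.mem_range.mp hi)
        gcongr
    _ = (∑ i ∈ Finset.range n, (1 / 2 : ℝ) ^ i) * M := by rw [Finset.sum_mul]
    _ ≤ _ := by gcongr; exact sum_geometric_two_le n

open Classical in
/-- the mass of `t i` where it is large compared to the density -/
noncomputable def peak {ι : Type} (n : ℕ) (Ω : Finset ι) (t : ℕ → ι → ℝ) (i : ℕ) (K : ℝ) : ℝ :=
  ∑ ω ∈ Ω with K * dens n t ω < |t i ω|, |t i ω|

open Classical in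
theorem sum_dens_peak {ι : Type} {n : ℕ} {t : ℕ → ι → ℝ} {Ω : Finset ι} {M K : ℝ} (hK : 0 < K)
    {i : ℕ} (h : ∑ ω ∈ Ω, |t i ω| ≤ M) :
    ∑ ω ∈ Ω with K * dens n t ω < |t i ω|, dens n t ω ≤ M / K := by
  rw [le_div_iff₀ hK, Finset.sum_mul]
  refine le_trans ?_ h
  calc _ ≤ ∑ ω ∈ Ω with K * dens n t ω < |t i ω|, |t i ω| := by
        refine Finset.sum_le_sum fun ω hω => ?_
        have := (Finset.mem_filter.mp hω).2
        linarith
    _ ≤ _ := Finset.sum_le_sum_of_subset_of_nonneg (Finset.filter_subset _ _)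
        fun _ _ _ => abs_nonneg _

open Classical in
/-- upper estimate of the sign averages when there are no peaks -/
theorem flat_estimate {ι : Type} {n : ℕ} {t : ℕ → ι → ℝ} {Ω : Finset ι} {M K ε : ℝ} (hM : 0 ≤ M)
    (hK : 0 < K) (h : ∀ i < n, ∑ ω ∈ Ω, |t i ω| ≤ M) (s : Finset ℕ) (r : ℕ)
    (hr : s.card = r ^ 2) (hp : ∀ i ∈ s, peak n Ω t i K ≤ ε) :
    ∑ p ∈ s.powerset, ∑ ω ∈ Ω, |∑ i ∈ s, sg p i * t i ω| ≤
      2 ^ s.card * (s.card * ε + r * K * (2 * M)) := by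
  rw [Finset.sum_comm]
  have h1 : ∀ ω ∈ Ω, ∑ p ∈ s.powerset, |∑ i ∈ s, sg p i * t i ω| ≤
      2 ^ s.card * ((∑ i ∈ s, if K * dens n t ω < |t i ω| then |t i ω| else 0)
        + r * (K * dens n t ω)) := by
    intro ω _
    have hd := dens_nonneg n t ω
    have := sg_upper s (fun i => if K * dens n t ω < |t i ω| then 0 else t i ω)
      (K * dens n t ω) r hr (by positivity) (by
        intro i _
        show |if _ then _ else _| ≤ _
        split_ifs with h
        · simp; positivity
        · exact not_lt.mp h)
    rw [mul_add]
    refine le_trans ?_ (add_le_add (le_refl _) this)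
    have e : (2:ℝ) ^ s.card * (∑ i ∈ s, if K * dens n t ω < |t i ω| then |t i ω| else 0) =
        ∑ p ∈ s.powerset, ∑ i ∈ s, if K * dens n t ω < |t i ω| then |t i ω| else 0 := by
      rw [Finset.sum_const, Finset.card_powerset, nsmul_eq_mul]; push_cast; ring
    rw [e, ← Finset.sum_add_distrib]
    refine Finset.sum_le_sum fun p _ => ?_
    have e2 : ∑ i ∈ s, sg p i * t i ω =
        (∑ i ∈ s, sg p i * if K * dens n t ω < |t i ω| then t i ω else 0) +
        ∑ i ∈ s, sg p i * if K * dens n t ω < |t i ω| then 0 else t i ω := by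
      rw [← Finset.sum_add_distrib]
      refine Finset.sum_congr rfl fun i _ => ?_
      split_ifs <;> simp
    rw [e2]
    refine (abs_add_le _ _).trans (add_le_add ?_ le_rfl)
    refine (Finset.abs_sum_le_sum_abs _ _).trans (Finset.sum_le_sum fun i _ => ?_)
    rw [abs_mul, abs_sg, one_mul]
    split_ifs <;> simp
  refine (Finset.sum_le_sum h1).trans ?_
  rw [← Finset.mul_sum, Finset.sum_add_distrib, Finset.sum_comm, ← Finset.mul_sum,
    ← Finset.mul_sum]
  have h2 : ∑ i ∈ s, ∑ ω ∈ Ω, (if K * dens n t ω < |t i ω| then |t i ω| else 0) ≤ s.card * ε := by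
    rw [← nsmul_eq_mul]
    refine Finset.sum_le_card_nsmul _ _ _ fun i hi => ?_
    rw [← Finset.sum_filter]
    exact hp i hi
  have h3 := sum_dens_le hM h
  rw [mul_assoc (r:ℝ)]
  gcongr

open Classical in
/-- lower estimate of the sign averages when there are almost disjoint peaks -/
theorem peak_estimate {ι : Type} {n : ℕ} {t : ℕ → ι → ℝ} {Ω : Finset ι} {M ε : ℝ}
    (hε : 0 < ε) {Kf : ℕ → ℝ} (hK : ∀ k, 0 < Kf k) {φ : ℕ → ℕ} {N : ℕ} (hφ : ∀ k < N, φ k < n)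
    (h : ∀ i < n, ∑ ω ∈ Ω, |t i ω| ≤ M)
    (hp : ∀ k < N, ε ≤ peak n Ω t (φ k) (Kf k))
    (hKf : ∀ k j, k < j → 2 ^ (φ k) * (M / Kf j) ≤ ε * (1 / 2) ^ (j + 2))
    (a : ℕ → ℝ) :
    2 ^ N * (ε / 2 * ∑ k ∈ Finset.range N, |a k|) ≤ ∑ p ∈ (Finset.range N).powerset,
      ∑ ω ∈ Ω, |∑ k ∈ Finset.range N, sg p k * (a k * t (φ k) ω)| := by
  rw [Finset.sum_comm]
  let B : ℕ → ι → Prop := fun k ω => Kf k * dens n t ω < |t (φ k) ω|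
  let A : ℕ → ι → Prop := fun k ω => B k ω ∧ ∀ j < N, k < j → ¬ B j ω
  have h1 : ∀ ω ∈ Ω, 2 ^ N * ∑ k ∈ Finset.range N, (if A k ω then |a k * t (φ k) ω| else 0) ≤
      ∑ p ∈ (Finset.range N).powerset, |∑ k ∈ Finset.range N, sg p k * (a k * t (φ k) ω)| := by
    intro ω _
    by_cases hex : ∃ k ∈ Finset.range N, A k ω
    · obtain ⟨k, hk, hA⟩ := hex
      rw [Finset.sum_eq_single k]
      · have := sg_lower (Finset.range N) (fun k => a k * t (φ k) ω) hk
        rw [Finset.card_range] at this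
        simpa [hA] using this
      · intro j hj hjk
        rw [if_neg]
        intro hAj
        rcases lt_or_gt_of_ne hjk with h | h
        · exact hAj.2 k (Finset.mem_range.mp hk) h hA.1
        · exact hA.2 j (Finset.mem_range.mp hj) h hAj.1
      · intro h; exact absurd hk h
    · rw [Finset.sum_eq_zero]
      · simp only [mul_zero]; exact Finset.sum_nonneg fun _ _ => abs_nonneg _
      · intro k hk; rw [if_neg]; exact fun h => hex ⟨k, hk, h⟩
  refine le_trans ?_ (Finset.sum_le_sum h1)
  rw [← Finset.mul_sum, Finset.sum_comm, Finset.mul_sum]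
  gcongr with k hk
  have hkN := Finset.mem_range.mp hk
  have h2 : ε / 2 ≤ ∑ ω ∈ Ω, if A k ω then |t (φ k) ω| else 0 := by
    have h3 : ∀ ω ∈ Ω, (if B k ω then |t (φ k) ω| else 0) ≤ (if A k ω then |t (φ k) ω| else 0) +
        ∑ j ∈ Finset.range N, if k < j ∧ B j ω then |t (φ k) ω| else 0 := by
      intro ω _
      have hnn : 0 ≤ ∑ j ∈ Finset.range N, if k < j ∧ B j ω then |t (φ k) ω| else 0 :=
        Finset.sum_nonneg fun j _ => by split_ifs <;> simp
      by_cases hA : A k ω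
      · rw [if_pos hA, if_pos hA.1]; linarith
      · rw [if_neg hA]
        split_ifs with hB
        · have : ∃ j < N, k < j ∧ B j ω := by
            by_contra hcon
            push Not at hcon
            exact hA ⟨hB, hcon⟩
          obtain ⟨j, hj, hkj⟩ := this
          have := Finset.single_le_sum (s := Finset.range N)
            (f := fun j => if k < j ∧ B j ω then |t (φ k) ω| else 0)
            (fun j _ => by split_ifs <;> simp) (Finset.mem_range.mpr hj)
          simp only [if_pos hkj] at this
          linarith
        · linarith
    have h4 := Finset.sum_le_sum h3
    rw [Finset.sum_add_distrib, Finset.sum_comm (s := Ω) (t := Finset.range N)] at h4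
    have h5 : ε ≤ ∑ ω ∈ Ω, if B k ω then |t (φ k) ω| else 0 := by
      rw [← Finset.sum_filter]; exact hp k hkN
    have h6 : ∑ j ∈ Finset.range N, ∑ ω ∈ Ω, (if k < j ∧ B j ω then |t (φ k) ω| else 0) ≤
        ε / 2 := by
      calc _ ≤ ∑ j ∈ Finset.range N, ε * (1 / 2) ^ (j + 2) := by
            refine Finset.sum_le_sum fun j hj => ?_
            by_cases hkj : k < j
            · simp only [hkj, true_and]
              rw [← Finset.sum_filter]
              refine le_trans ?_ (hKf k j hkj)
              have := sum_dens_peak (n := n) (hK j) (h (φ j) (hφ j (Finset.mem_range.mp hj)))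
              calc _ ≤ ∑ ω ∈ Ω with B j ω, 2 ^ φ k * dens n t ω :=
                    Finset.sum_le_sum fun ω _ => le_dens (hφ k hkN) t ω
                _ = 2 ^ φ k * ∑ ω ∈ Ω with B j ω, dens n t ω := by rw [Finset.mul_sum]
                _ ≤ _ := by gcongr
            · simp only [hkj, false_and, if_false, Finset.sum_const_zero]; positivity
        _ = ε / 4 * ∑ j ∈ Finset.range N, (1 / 2 : ℝ) ^ j := by
            rw [Finset.mul_sum]; refine Finset.sum_congr rfl fun j _ => ?_; rw [pow_add]; ring
        _ ≤ ε / 4 * 2 := by gcongr; exact sum_geometric_two_le N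
        _ = _ := by ring
    linarith
  calc ε / 2 * |a k| ≤ (∑ ω ∈ Ω, if A k ω then |t (φ k) ω| else 0) * |a k| := by gcongr
    _ = _ := by
      rw [Finset.sum_mul]
      refine Finset.sum_congr rfl fun ω _ => ?_
      split_ifs
      · rw [abs_mul]; ring
      · simp

theorem subseq_l1 {X : Type*} [NormedAddCommGroup X] [NormedSpace ℝ X] {y : ℕ → X}
    (hy : ∀ k, ‖y k‖ = 1) {U : ℝ} (hU : 1 ≤ U) (hunc : Unc y U) {c : ℝ} (hc : 0 < c)
    (has : ∀ m : ℕ, ∃ N : ℕ, ∀ s : Finset ℕ, s.card = m → (∀ i ∈ s, N ≤ i) →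
      c * m ≤ ‖∑ i ∈ s, y i‖) {M : ℝ} (hM : 1 ≤ M) (hrep : L1Rep y M) :
    ∃ φ : ℕ → ℕ, ∃ c' : ℝ, 0 < c' ∧ ∀ (N : ℕ) (a : ℕ → ℝ),
      c' * ∑ k ∈ Finset.range N, |a k| ≤ ‖∑ k ∈ Finset.range N, a k • y (φ k)‖ := by
  have hM0 : 0 < M := by linarith
  have hU0 : 0 < U := by linarith
  choose ι Ω t ht using fun n => hrep n (c / (4 * U)) (by positivity)
  have htM : ∀ n, ∀ i < n, ∑ ω ∈ Ω n, |t n i ω| ≤ M := by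
    intro n i hi
    have := (ht n {i} (by simpa using hi) (fun _ => 1)).2
    simpa [hy] using this
  have hat : ∀ m : ℕ, ∀ᶠ n in (Filter.hyperfilter ℕ : Filter ℕ), m ≤ n := by
    intro m
    refine Filter.hyperfilter_le_cofinite ?_
    rw [Nat.cofinite_eq_atTop]
    exact Filter.eventually_ge_atTop m
  set ε : ℝ := c / (4 * U * M) with hεdef
  have hε : 0 < ε := by positivity
  have claim : ∀ K : ℝ, 0 < K → ∀ i0 : ℕ, ∃ i, i0 ≤ i ∧
      ∀ᶠ n in (Filter.hyperfilter ℕ : Filter ℕ), ε ≤ peak n (Ω n) (t n) i K := by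
    intro K hK i0
    by_contra hcon
    push Not at hcon
    obtain ⟨r, hr⟩ := exists_nat_gt (4 * U * M * K * (2 * M) / c)
    obtain ⟨N, hN⟩ := has (r ^ 2)
    set b := max i0 N
    let s := Finset.Ico b (b + r ^ 2)
    have hcard : s.card = r ^ 2 := by simp [s]
    have hsb : ∀ i ∈ s, b ≤ i ∧ i < b + r ^ 2 := fun i hi => Finset.mem_Ico.mp hi
    have hev : ∀ᶠ n in (Filter.hyperfilter ℕ : Filter ℕ),
        ∀ i ∈ s, ¬ (ε ≤ peak n (Ω n) (t n) i K) := by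
      rw [Filter.eventually_all_finset]
      intro i hi
      rw [Ultrafilter.eventually_not]
      have := hcon i ((le_max_left _ _).trans (hsb i hi).1)
      simpa using this
    obtain ⟨n, hn1, hn2⟩ := (hev.and (hat (b + r ^ 2))).exists
    have hsn : s ⊆ Finset.range n := fun i hi =>
      Finset.mem_range.mpr ((hsb i hi).2.trans_le hn2)
    have hflat := flat_estimate hM0.le hK (htM n) s r hcard
      (fun i hi => (not_le.mp (hn1 i hi)).le)
    have hlow := hN s hcard (fun i hi => (le_max_right _ _).trans (hsb i hi).1)
    have hp : ∀ p ∈ s.powerset, c * (r ^ 2 : ℕ) ≤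
        U * (M * ∑ ω ∈ Ω n, |∑ i ∈ s, sg p i * t n i ω| + c / (4 * U) * (r ^ 2 : ℕ)) := by
      intro p _
      have h1 := hunc s (sg p) (fun _ => 1) (fun k _ => by simp [abs_sg])
      have h2 := (ht n s hsn (sg p)).1
      simp only [abs_sg, Finset.sum_const, hcard, nsmul_eq_mul, mul_one] at h2
      simp only [one_smul] at h1
      exact hlow.trans (h1.trans (by gcongr))
    have hsum := Finset.sum_le_sum hp
    rw [Finset.sum_const, Finset.card_powerset, nsmul_eq_mul, ← Finset.mul_sum,
      Finset.sum_add_distrib, ← Finset.mul_sum, Finset.sum_const, Finset.card_powerset,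
      nsmul_eq_mul, hcard] at hsum
    rw [hcard] at hflat
    push_cast at hsum hflat
    set S := ∑ p ∈ s.powerset, ∑ ω ∈ Ω n, |∑ i ∈ s, sg p i * t n i ω|
    have h3 : (2:ℝ) ^ r ^ 2 * (c * r ^ 2) ≤ 2 ^ r ^ 2 *
        (U * (M * (r ^ 2 * ε + r * K * (2 * M)) + c / (4 * U) * r ^ 2)) := by
      calc _ ≤ _ := hsum
        _ ≤ U * (M * (2 ^ r ^ 2 * (r ^ 2 * ε + r * K * (2 * M))) +
              2 ^ r ^ 2 * (c / (4 * U) * r ^ 2)) := by gcongr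
        _ = _ := by ring
    have h4 := le_of_mul_le_mul_left h3 (by positivity)
    have h5 : U * (M * (r ^ 2 * ε + r * K * (2 * M)) + c / (4 * U) * r ^ 2) =
        c * r ^ 2 / 2 + U * M * K * (2 * M) * r := by
      rw [hεdef]; field_simp; ring
    rw [h5] at h4
    rw [div_lt_iff₀ hc] at hr
    have hr0 : (0:ℝ) < r := by
      have : 0 < 4 * U * M * K * (2 * M) := by positivity
      by_contra hneg
      have := mul_nonpos_of_nonpos_of_nonneg (not_lt.mp hneg) hc.le
      linarith
    nlinarith [mul_lt_mul_of_pos_right hr hr0, mul_pos hc (pow_pos hr0 2)]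
  choose! G hG1 hG2 using claim
  let Kn : ℕ → ℕ → ℝ := fun k i => 2 ^ (k + 3 + i) * M / ε
  have hKn : ∀ k i, 0 < Kn k i := fun k i => by positivity
  let φ : ℕ → ℕ := fun k => Nat.rec (G 1 0) (fun k i => G (Kn k i) (i + 1)) k
  have hφs : ∀ k, φ (k + 1) = G (Kn k (φ k)) (φ k + 1) := fun k => rfl
  have hφm : StrictMono φ := strictMono_nat_of_lt_succ fun k => by
    have := hG1 (Kn k (φ k)) (hKn _ _) (φ k + 1)
    rw [hφs]; omega
  let Kf : ℕ → ℝ := fun k => match k with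
    | 0 => 1
    | k + 1 => Kn k (φ k)
  have hKf : ∀ k, 0 < Kf k := fun k => by
    cases k with
    | zero => exact one_pos
    | succ k => exact hKn _ _
  have hpk : ∀ k, ∀ᶠ n in (Filter.hyperfilter ℕ : Filter ℕ),
      ε ≤ peak n (Ω n) (t n) (φ k) (Kf k) := fun k => by
    cases k with
    | zero => exact hG2 1 one_pos 0
    | succ k => exact hG2 (Kn k (φ k)) (hKn _ _) (φ k + 1)
  have hKf2 : ∀ k j, k < j → 2 ^ (φ k) * (M / Kf j) ≤ ε * (1 / 2) ^ (j + 2) := by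
    intro k j hkj
    obtain ⟨j, rfl⟩ : ∃ j', j = j' + 1 := ⟨j - 1, by omega⟩
    have hle : φ k ≤ φ j := hφm.monotone (by omega)
    show 2 ^ (φ k) * (M / (2 ^ (j + 3 + φ j) * M / ε)) ≤ _
    have : (2:ℝ) ^ (φ k) ≤ 2 ^ (φ j) := pow_le_pow_right₀ (by norm_num) hle
    calc _ ≤ (2:ℝ) ^ (φ j) * (M / (2 ^ (j + 3 + φ j) * M / ε)) := by gcongr
      _ = _ := by
        rw [one_div, inv_pow, pow_add (2:ℝ) (j + 3)]
        field_simp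
  refine ⟨φ, ε / 2 / (M * U), by positivity, fun N a => ?_⟩
  have hev : ∀ᶠ n in (Filter.hyperfilter ℕ : Filter ℕ),
      ∀ k ∈ Finset.range N, ε ≤ peak n (Ω n) (t n) (φ k) (Kf k) := by
    rw [Filter.eventually_all_finset]
    exact fun k _ => hpk k
  obtain ⟨n, hn1, hn2⟩ := (hev.and (hat (φ N))).exists
  have hφn : ∀ k < N, φ k < n := fun k hk => (hφm hk).trans_le hn2
  have hpe := peak_estimate hε hKf hφn (htM n) (fun k hk => hn1 k (Finset.mem_range.mpr hk))
    hKf2 a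
  set V := ‖∑ k ∈ Finset.range N, a k • y (φ k)‖
  have hup : ∀ p ∈ (Finset.range N).powerset,
      ∑ ω ∈ Ω n, |∑ k ∈ Finset.range N, sg p k * (a k * t n (φ k) ω)| ≤ M * (U * V) := by
    intro p _
    have hu := (hunc.comp hφm.injective) (Finset.range N) a (fun k => sg p k * a k)
      (fun k _ => by rw [abs_mul, abs_sg, one_mul])
    have h1 := (ht n ((Finset.range N).map ⟨φ, hφm.injective⟩) (by
      intro i hi
      obtain ⟨k, hk, rfl⟩ := Finset.mem_map.mp hi
      exact Finset.mem_range.mpr (hφn k (Finset.mem_range.mp hk)))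
      (Function.extend φ (fun k => sg p k * a k) 0)).2
    rw [← extend_sum hφm.injective] at h1
    have e : ∀ ω, ∑ k ∈ Finset.range N, sg p k * (a k * t n (φ k) ω) =
        ∑ i ∈ (Finset.range N).map ⟨φ, hφm.injective⟩,
          Function.extend φ (fun k => sg p k * a k) 0 i * t n i ω := by
      intro ω
      have := extend_sum hφm.injective (Finset.range N) (fun k => sg p k * a k)
        (fun i => t n i ω)
      simp only [smul_eq_mul] at this
      rw [← this]
      exact Finset.sum_congr rfl fun k _ => by ring
    simp only [e]
    exact h1.trans (by gcongr)
  have hs := hpe.trans (Finset.sum_le_sum hup)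
  rw [Finset.sum_const, Finset.card_powerset, Finset.card_range, nsmul_eq_mul] at hs
  push_cast at hs
  have h6 := le_of_mul_le_mul_left hs (by positivity)
  rw [div_mul_eq_mul_div, div_le_iff₀ (by positivity)]
  linarith

theorem containsL1_of_seq {X : Type*} [NormedAddCommGroup X] [NormedSpace ℝ X] [CompleteSpace X]
    {z : ℕ → X} (hz : ∀ k, ‖z k‖ = 1) {c : ℝ} (hc : 0 < c)
    (h : ∀ (N : ℕ) (a : ℕ → ℝ),
      c * ∑ k ∈ Finset.range N, |a k| ≤ ‖∑ k ∈ Finset.range N, a k • z k‖) : ContainsL1 X := by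
  have hs : ∀ a : lp (fun _ : ℕ => ℝ) 1, HasSum (fun k => |a k|) ‖a‖ := by
    intro a
    have := lp.hasSum_norm (p := 1) (by simp) a
    simpa using this
  have hsn : ∀ a : lp (fun _ : ℕ => ℝ) 1, ∀ k, ‖a k • z k‖ = |a k| := by
    intro a k; rw [norm_smul, hz, mul_one, Real.norm_eq_abs]
  have hsum : ∀ a : lp (fun _ : ℕ => ℝ) 1, Summable (fun k => a k • z k) := by
    intro a
    refine Summable.of_norm ?_
    simp only [hsn]
    exact (hs a).summable
  let T0 : lp (fun _ : ℕ => ℝ) 1 →ₗ[ℝ] X :=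
    { toFun := fun a => ∑' k, a k • z k
      map_add' := by
        intro a b
        rw [← (hsum a).tsum_add (hsum b)]
        refine tsum_congr fun k => ?_
        rw [← add_smul]; rfl
      map_smul' := by
        intro r a
        rw [RingHom.id_apply, ← (hsum a).tsum_const_smul]
        refine tsum_congr fun k => ?_
        rw [smul_smul]; rfl }
  let T := T0.mkContinuous 1 (by
    intro a
    rw [one_mul]
    exact tsum_of_norm_bounded (hs a) fun k => (hsn a k).le)
  refine ⟨T, c, hc, fun a => ?_⟩
  have h1 := ((hs a).tendsto_sum_nat).const_mul c
  have h2 := ((hsum a).hasSum.tendsto_sum_nat).norm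
  exact le_of_tendsto_of_tendsto' h1 h2 fun N => h N a

theorem asymp_fam {X : Type*} [NormedAddCommGroup X] [NormedSpace ℝ X] {x : ℕ → X}
    (ha : StronglyAsymptoticL1 x) : ∃ C : ℝ, 1 ≤ C ∧ ∀ N : ℕ, ∃ f : ℕ,
      ∀ (ι : Type) (L : Finset ι) (w : ι → X) (S : ι → Finset ℕ), L.card ≤ N →
        (∀ l ∈ L, w l ∈ Submodule.span ℝ (x '' ↑(S l))) → (∀ l ∈ L, ∀ k ∈ S l, f ≤ k) →
        (∀ l ∈ L, ∀ l' ∈ L, l ≠ l' → Disjoint (S l) (S l')) → ∀ a : ι → ℝ,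
        C⁻¹ * ∑ l ∈ L, |a l| * ‖w l‖ ≤ ‖∑ l ∈ L, a l • w l‖ ∧
        ‖∑ l ∈ L, a l • w l‖ ≤ C * ∑ l ∈ L, |a l| * ‖w l‖ := by
  classical
  obtain ⟨f, C, hC, h⟩ := ha
  refine ⟨C, hC, fun N => ⟨(Finset.range (N + 1)).sup f, ?_⟩⟩
  intro ι L w S hcard hw hS hd a
  set L' := L.filter (fun l => w l ≠ 0) with hL'
  have hL'L : ∀ l ∈ L', l ∈ L ∧ w l ≠ 0 := fun l hl => Finset.mem_filter.mp hl
  let e := L'.equivFin.symm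
  have hf : f L'.card ≤ (Finset.range (N + 1)).sup f := by
    apply Finset.le_sup (f := f)
    have : L'.card ≤ L.card := Finset.card_filter_le _ _
    exact Finset.mem_range.mpr (by omega)
  have key := h L'.card (fun i => ‖w (e i)‖⁻¹ • w (e i)) (fun i => S (e i))
    (fun i => by
      have := (hL'L _ (e i).2).2
      rw [norm_smul, norm_inv, norm_norm, inv_mul_cancel₀ (norm_ne_zero_iff.mpr this)])
    (fun i => Submodule.smul_mem _ _ (hw _ (hL'L _ (e i).2).1))
    (fun i k hk => hf.trans (hS _ (hL'L _ (e i).2).1 k hk))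
    (fun i j hij => hd _ (hL'L _ (e i).2).1 _ (hL'L _ (e j).2).1
      (fun hh => hij (e.injective (Subtype.ext hh))))
    (fun i => a (e i) * ‖w (e i)‖)
  have e1 : ∑ i, |a (e i) * ‖w (e i)‖| = ∑ l ∈ L, |a l| * ‖w l‖ := by
    rw [Equiv.sum_comp e (fun l : L' => |a l * ‖w l‖|),
      Finset.sum_coe_sort L' (fun l => |a l * ‖w l‖|), hL', Finset.sum_filter]
    refine Finset.sum_congr rfl fun l _ => ?_
    split_ifs with hh
    · rw [abs_mul, abs_norm]
    · simp [not_not.mp hh]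
  have e2 : ∑ i, (a (e i) * ‖w (e i)‖) • ‖w (e i)‖⁻¹ • w (e i) = ∑ l ∈ L, a l • w l := by
    rw [Equiv.sum_comp e (fun l : L' => (a l * ‖w l‖) • ‖w l‖⁻¹ • w l),
      Finset.sum_coe_sort L' (fun l => (a l * ‖w l‖) • ‖w l‖⁻¹ • w l), hL', Finset.sum_filter]
    refine Finset.sum_congr rfl fun l _ => ?_
    split_ifs with hh
    · rw [smul_smul, mul_assoc, mul_inv_cancel₀ (norm_ne_zero_iff.mpr hh), mul_one]
    · simp [not_not.mp hh]
  rwa [e1, e2] at key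

theorem discretize {X : Type*} [NormedAddCommGroup X] [NormedSpace ℝ X] {x : ℕ → X} {U : ℝ}
    (hU : 1 ≤ U) (hunc : Unc x U) (n : ℕ) (Q : ℕ) (hQ : 0 < Q) (s : Finset ℕ) (α : ℕ → ℕ → ℝ) :
    ∃ (w : (Fin n → ℤ) → X) (S : (Fin n → ℤ) → Finset ℕ) (cf : ℕ → (Fin n → ℤ) → ℝ),
      (∀ l, S l ⊆ s) ∧ (∀ l l', l ≠ l' → Disjoint (S l) (S l')) ∧
      (∀ l, w l ∈ Submodule.span ℝ (x '' ↑(S l))) ∧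
      ∀ i < n, ‖∑ k ∈ s, α i k • x k -
        ∑ l ∈ Fintype.piFinset (fun _ : Fin n => Finset.Icc (-(Q : ℤ)) Q), cf i l • w l‖ ≤
        U ^ 2 / Q * ∑ j ∈ Finset.range n, ‖∑ k ∈ s, α j k • x k‖ := by
  classical
  have hQ0 : (0:ℝ) < Q := by exact_mod_cast hQ
  let tot : ℕ → ℝ := fun k => ∑ j ∈ Finset.range n, |α j k|
  have htot0 : ∀ k, 0 ≤ tot k := fun k => Finset.sum_nonneg fun _ _ => abs_nonneg _
  have htot : ∀ i < n, ∀ k, |α i k| ≤ tot k := fun i hi k =>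
    Finset.single_le_sum (f := fun j => |α j k|) (fun _ _ => abs_nonneg _) (Finset.mem_range.mpr hi)
  let lab : ℕ → Fin n → ℤ := fun k i => ⌊α i k / tot k * Q⌋
  have hr : ∀ i < n, ∀ k, |α i k / tot k| ≤ 1 := by
    intro i hi k
    rw [abs_div, abs_of_nonneg (htot0 k)]
    exact div_le_one_of_le₀ (htot i hi k) (htot0 k)
  have hrt : ∀ i < n, ∀ k, α i k = α i k / tot k * tot k := by
    intro i hi k
    by_cases h0 : tot k = 0
    · have := htot i hi k
      rw [h0] at this ⊢
      simpa using this
    · field_simp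
  let L := Fintype.piFinset (fun _ : Fin n => Finset.Icc (-(Q : ℤ)) Q)
  have hlab : ∀ k, lab k ∈ L := by
    intro k
    rw [Fintype.mem_piFinset]
    intro i
    have h1 := abs_le.mp (hr i i.2 k)
    rw [Finset.mem_Icc]
    constructor
    · rw [Int.le_floor]; push_cast; nlinarith
    · have : (lab k i : ℝ) ≤ Q := (Int.floor_le _).trans (by nlinarith)
      exact_mod_cast this
  let cf : ℕ → (Fin n → ℤ) → ℝ := fun i l => if h : i < n then (l ⟨i, h⟩ : ℝ) / Q else 0
  let S : (Fin n → ℤ) → Finset ℕ := fun l => s.filter (fun k => lab k = l)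
  refine ⟨fun l => ∑ k ∈ S l, tot k • x k, S, cf, fun l => Finset.filter_subset _ _, ?_, ?_, ?_⟩
  · intro l l' hl
    rw [Finset.disjoint_left]
    intro k h1 h2
    exact hl ((Finset.mem_filter.mp h1).2.symm.trans (Finset.mem_filter.mp h2).2)
  · intro l
    refine Submodule.sum_mem _ fun k hk => Submodule.smul_mem _ _ (Submodule.subset_span ?_)
    exact ⟨k, hk, rfl⟩
  · intro i hi
    have e1 : ∑ l ∈ L, cf i l • ∑ k ∈ S l, tot k • x k =
        ∑ k ∈ s, (cf i (lab k) * tot k) • x k := by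
      rw [← Finset.sum_fiberwise_of_maps_to (s := s) (t := L) (g := lab) (fun k _ => hlab k)]
      refine Finset.sum_congr rfl fun l _ => ?_
      rw [Finset.smul_sum]
      refine Finset.sum_congr rfl fun k hk => ?_
      rw [smul_smul, (Finset.mem_filter.mp hk).2]
    show ‖_ - ∑ l ∈ L, cf i l • ∑ k ∈ S l, tot k • x k‖ ≤ _
    rw [e1, ← Finset.sum_sub_distrib]
    simp only [← sub_smul]
    have h1 : ∀ k ∈ s, |α i k - cf i (lab k) * tot k| ≤ |tot k / Q| := by
      intro k _
      rw [abs_of_nonneg (div_nonneg (htot0 k) hQ0.le)]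
      have e : cf i (lab k) = (⌊α i k / tot k * Q⌋ : ℝ) / Q := by simp [cf, hi, lab]
      rw [e]
      have hrk := hrt i hi k
      generalize α i k / tot k = ρ at hrk ⊢
      rw [hrk]
      have f1 := Int.floor_le (ρ * Q)
      have f2 := Int.lt_floor_add_one (ρ * Q)
      have e3 : ρ * tot k - (⌊ρ * Q⌋ : ℝ) / Q * tot k = (ρ * Q - ⌊ρ * Q⌋) * (tot k / Q) := by
        field_simp
      have e3' := div_nonneg (htot0 k) hQ0.le
      rw [e3, abs_mul, abs_of_nonneg e3', abs_of_nonneg (by linarith)]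
      nlinarith
    have h2 := hunc s (fun k => tot k / Q) (fun k => α i k - cf i (lab k) * tot k) h1
    refine h2.trans ?_
    have e4 : ∑ k ∈ s, (tot k / Q) • x k =
        (Q:ℝ)⁻¹ • ∑ j ∈ Finset.range n, ∑ k ∈ s, |α j k| • x k := by
      rw [Finset.sum_comm, Finset.smul_sum]
      refine Finset.sum_congr rfl fun k _ => ?_
      rw [← Finset.sum_smul, smul_smul]
      congr 1
      rw [div_eq_inv_mul]
    rw [e4, norm_smul, norm_inv, Real.norm_eq_abs, abs_of_pos hQ0]
    calc U * ((Q:ℝ)⁻¹ * ‖∑ j ∈ Finset.range n, ∑ k ∈ s, |α j k| • x k‖)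
        ≤ U * ((Q:ℝ)⁻¹ * ∑ j ∈ Finset.range n, U * ‖∑ k ∈ s, α j k • x k‖) := by
          gcongr
          refine (norm_sum_le _ _).trans (Finset.sum_le_sum fun j _ => ?_)
          exact hunc s (α j) (fun k => |α j k|) (fun k _ => by rw [abs_abs])
      _ = _ := by rw [← Finset.mul_sum]; ring

theorem norm_sum_sub_le {X : Type*} [NormedAddCommGroup X] [NormedSpace ℝ X] (s : Finset ℕ)
    (a : ℕ → ℝ) (u v : ℕ → X) (e : ℝ) (h : ∀ i ∈ s, ‖u i - v i‖ ≤ e) :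
    ‖∑ i ∈ s, a i • u i - ∑ i ∈ s, a i • v i‖ ≤ e * ∑ i ∈ s, |a i| := by
  rw [← Finset.sum_sub_distrib, Finset.mul_sum]
  refine (norm_sum_le _ _).trans (Finset.sum_le_sum fun i hi => ?_)
  rw [← smul_sub, norm_smul, Real.norm_eq_abs, mul_comm]
  exact mul_le_mul_of_nonneg_right (h i hi) (abs_nonneg _)

theorem rep_of_tail {X : Type*} [NormedAddCommGroup X] [NormedSpace ℝ X] {x y : ℕ → X}
    {U : ℝ} (hU : 1 ≤ U) (hunc : Unc x U) (huncy : Unc y U) (hy : ∀ k, ‖y k‖ = 1)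
    (ha : StronglyAsymptoticL1 x) {K : ℝ} (hK : 0 < K)
    (hemb : ∀ m : ℕ, Embeds K X ↥((Submodule.span ℝ (x '' {k | m ≤ k})).topologicalClosure)) :
    ∃ M : ℝ, 1 ≤ M ∧ L1Rep y M := by
  classical
  obtain ⟨C, hC, hfam⟩ := asymp_fam ha
  have hC0 : 0 < C := by linarith
  refine ⟨C * (K + 1), by nlinarith, ?_⟩
  intro n δ hδ
  set e : ℝ := min δ (1 / (n * U + 1)) with he
  have hnU : (0:ℝ) ≤ n * U := by positivity
  have he0 : 0 < e := lt_min hδ (by positivity)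
  have heδ : e ≤ δ := min_le_left _ _
  have hen : e * (n * U) ≤ 1 := by
    have h1 : e ≤ 1 / (n * U + 1) := min_le_right _ _
    rw [le_div_iff₀ (by positivity)] at h1
    nlinarith
  have he1 : e ≤ 1 := by
    have h1 : e ≤ 1 / (n * U + 1) := min_le_right _ _
    rw [le_div_iff₀ (by positivity)] at h1
    nlinarith
  obtain ⟨Q0, hQ0⟩ := exists_nat_gt (2 * U ^ 2 * (n * (K + 1)) / e)
  set Q := Q0 + 1 with hQdef
  have hQ : 0 < Q := by omega
  have hQr : (0:ℝ) < Q := by exact_mod_cast hQ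
  have hQe : U ^ 2 / Q * (n * (K + 1)) ≤ e / 2 := by
    have : 2 * U ^ 2 * (n * (K + 1)) / e < Q := hQ0.trans (by rw [hQdef]; push_cast; linarith)
    rw [div_lt_iff₀ he0] at this
    rw [div_mul_eq_mul_div, div_le_iff₀ hQr]
    linarith
  set L := Fintype.piFinset (fun _ : Fin n => Finset.Icc (-(Q : ℤ)) Q) with hL
  obtain ⟨f, hf⟩ := hfam L.card
  obtain ⟨T, hT⟩ := hemb f
  let z : ℕ → X := fun i => (T (y i) : X)
  -- approximation by finitely supported vectors
  have happ : ∀ i, ∃ (s : Finset ℕ) (α : ℕ → ℝ), (∀ k ∈ s, f ≤ k) ∧ (∀ k, k ∉ s → α k = 0) ∧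
      ‖z i - ∑ k ∈ s, α k • x k‖ ≤ e / 2 := by
    intro i
    have hz : z i ∈ closure (Submodule.span ℝ (x '' {k | f ≤ k}) : Set X) := (T (y i)).2
    obtain ⟨v, hv, hd⟩ := Metric.mem_closure_iff.mp hz (e / 2) (by positivity)
    obtain ⟨l, hl, hlv⟩ := (Finsupp.mem_span_image_iff_linearCombination ℝ).mp hv
    refine ⟨l.support, l, fun k hk => ?_, fun k hk => Finsupp.notMem_support_iff.mp hk, ?_⟩
    · exact (Finsupp.mem_supported ℝ l).mp hl hk
    · rw [← dist_eq_norm]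
      have : ∑ k ∈ l.support, l k • x k = v := by
        rw [← hlv, Finsupp.linearCombination_apply, Finsupp.sum]
      rw [this]; exact hd.le
  choose s0 α hs0 hα hzα using happ
  let s := (Finset.range n).biUnion s0
  have hs : ∀ k ∈ s, f ≤ k := by
    intro k hk
    obtain ⟨i, _, hi⟩ := Finset.mem_biUnion.mp hk
    exact hs0 i k hi
  have hsα : ∀ i < n, ∑ k ∈ s, α i k • x k = ∑ k ∈ s0 i, α i k • x k := by
    intro i hi
    refine (Finset.sum_subset (Finset.subset_biUnion_of_mem s0 (Finset.mem_range.mpr hi)) ?_).symm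
    intro k _ hk
    rw [hα i k hk, zero_smul]
  have hz1 : ∀ i < n, ‖z i - ∑ k ∈ s, α i k • x k‖ ≤ e / 2 := fun i hi => by
    rw [hsα i hi]; exact hzα i
  have hzK : ∀ i, ‖z i‖ ≤ K := fun i => by
    have := (hT (y i)).2
    rw [hy, mul_one] at this
    exact this
  have hαn : ∀ i < n, ‖∑ k ∈ s, α i k • x k‖ ≤ K + 1 := by
    intro i hi
    have := norm_sub_norm_le (∑ k ∈ s, α i k • x k) (z i)
    rw [norm_sub_rev] at this
    linarith [hz1 i hi, hzK i]
  obtain ⟨w, S, cf, hSs, hdis, hw, happ⟩ := discretize hU hunc n Q hQ s α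
  let z'' : ℕ → X := fun i => ∑ l ∈ L, cf i l • w l
  have hzz : ∀ i < n, ‖z i - z'' i‖ ≤ e := by
    intro i hi
    have h1 := hz1 i hi
    have h2 := happ i hi
    have h3 : ∑ j ∈ Finset.range n, ‖∑ k ∈ s, α j k • x k‖ ≤ n * (K + 1) := by
      have := Finset.sum_le_card_nsmul (Finset.range n) (fun j => ‖∑ k ∈ s, α j k • x k‖) (K + 1)
        (fun j hj => hαn j (Finset.mem_range.mp hj))
      rwa [Finset.card_range, nsmul_eq_mul] at this
    have h4 : ‖∑ k ∈ s, α i k • x k - z'' i‖ ≤ e / 2 := by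
      refine h2.trans (le_trans ?_ hQe)
      gcongr
    calc ‖z i - z'' i‖ ≤ ‖z i - ∑ k ∈ s, α i k • x k‖ + ‖∑ k ∈ s, α i k • x k - z'' i‖ :=
          norm_sub_le_norm_sub_add_norm_sub _ _ _
      _ ≤ e := by linarith
  refine ⟨Fin n → ℤ, L, fun i l => cf i l * ‖w l‖, fun σ hσ a => ?_⟩
  have hσn : ∀ i ∈ σ, i < n := fun i hi => Finset.mem_range.mp (hσ hi)
  have hfa := hf (Fin n → ℤ) L w S le_rfl (fun l _ => hw l) (fun l _ k hk => hs k (hSs l hk))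
    (fun l _ l' _ hll => hdis l l' hll) (fun l => ∑ i ∈ σ, a i * cf i l)
  have e1 : ∑ l ∈ L, (∑ i ∈ σ, a i * cf i l) • w l = ∑ i ∈ σ, a i • z'' i := by
    simp only [z'', Finset.smul_sum, Finset.sum_smul, smul_smul]
    rw [Finset.sum_comm]
  have e2 : ∀ l, |∑ i ∈ σ, a i * cf i l| * ‖w l‖ = |∑ i ∈ σ, a i * (cf i l * ‖w l‖)| := by
    intro l
    rw [← abs_of_nonneg (norm_nonneg (w l)), ← abs_mul, Finset.sum_mul,
      abs_of_nonneg (norm_nonneg (w l))]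
    simp only [mul_assoc]
  rw [e1] at hfa
  simp only [e2] at hfa
  have hdiff := norm_sum_sub_le σ a z z'' e (fun i hi => hzz i (hσn i hi))
  set W := ∑ l ∈ L, |∑ i ∈ σ, a i * (cf i l * ‖w l‖)|
  set V := ‖∑ i ∈ σ, a i • y i‖ with hV
  set Z := ∑ i ∈ σ, a i • z i with hZ
  have eZ : Z = (T (∑ i ∈ σ, a i • y i) : X) := by
    simp [hZ, z]
  have hZ1 : V ≤ ‖Z‖ := by rw [eZ]; exact (hT _).1
  have hZ2 : ‖Z‖ ≤ K * V := by rw [eZ]; exact (hT _).2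
  have hW0 : 0 ≤ W := Finset.sum_nonneg fun _ _ => abs_nonneg _
  have hV0 : 0 ≤ V := norm_nonneg _
  have hA0 : 0 ≤ ∑ i ∈ σ, |a i| := Finset.sum_nonneg fun _ _ => abs_nonneg _
  have hA : ∑ i ∈ σ, |a i| ≤ n * U * V := by
    have h1 : ∀ i ∈ σ, |a i| ≤ U * V := by
      intro i hi
      have := huncy σ a (fun k => if k = i then a k else 0) (fun k _ => by
        split_ifs <;> simp)
      simp only [ite_smul, zero_smul, Finset.sum_ite_eq', hi, if_true] at this
      rwa [norm_smul, hy, mul_one, Real.norm_eq_abs] at this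
    have h2 := Finset.sum_le_card_nsmul σ (fun i => |a i|) (U * V) h1
    rw [nsmul_eq_mul] at h2
    have h3 : σ.card ≤ n := by simpa using Finset.card_le_card hσ
    have h4 : (σ.card : ℝ) ≤ n := by exact_mod_cast h3
    calc _ ≤ _ := h2
      _ ≤ n * (U * V) := by gcongr
      _ = _ := by ring
  have heA : e * ∑ i ∈ σ, |a i| ≤ V := by
    calc _ ≤ e * (n * U * V) := by gcongr
      _ = e * (n * U) * V := by ring
      _ ≤ 1 * V := by gcongr
      _ = V := one_mul V
  set Z'' := ∑ i ∈ σ, a i • z'' i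
  have t1 := norm_sub_norm_le Z Z''
  have t2 := norm_sub_norm_le Z'' Z
  rw [norm_sub_rev] at t2
  constructor
  · have h1 : e * ∑ i ∈ σ, |a i| ≤ δ * ∑ i ∈ σ, |a i| := by gcongr
    have h2 : C * W ≤ C * (K + 1) * W := by
      have : 0 ≤ C * W * K := by positivity
      nlinarith
    linarith [hfa.2]
  · have h1 := hfa.1
    rw [inv_mul_le_iff₀ hC0] at h1
    refine h1.trans ?_
    rw [mul_assoc]
    refine mul_le_mul_of_nonneg_left ?_ hC0.le
    linarith

theorem rep_of_finrep {X : Type*} [NormedAddCommGroup X] [NormedSpace ℝ X] {y : ℕ → X}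
    (h : CrudelyFinRepL1 X) : ∃ M : ℝ, 1 ≤ M ∧ L1Rep y M := by
  classical
  obtain ⟨M, hM, h⟩ := h
  refine ⟨max M 1, le_max_right _ _, ?_⟩
  intro n δ hδ
  let F : Submodule ℝ X := Submodule.span ℝ (y '' ↑(Finset.range n))
  have hF : FiniteDimensional ℝ F :=
    FiniteDimensional.span_of_finite ℝ ((Finset.range n).finite_toSet.image y)
  obtain ⟨T, hT⟩ := h F hF
  have hyF : ∀ i, i < n → y i ∈ F := fun i hi =>
    Submodule.subset_span ⟨i, by simpa using hi, rfl⟩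
  let yF : ℕ → F := fun i => if hi : i < n then ⟨y i, hyF i hi⟩ else 0
  let τ : ℕ → lp (fun _ : ℕ => ℝ) 1 := fun i => T (yF i)
  let P : Finset ℕ → lp (fun _ : ℕ => ℝ) 1 → lp (fun _ : ℕ => ℝ) 1 :=
    fun Ω f => ∑ ω ∈ Ω, lp.single 1 ω (f ω)
  have hev : ∀ᶠ Ω in (Filter.atTop : Filter (Finset ℕ)),
      ∀ i ∈ Finset.range n, ‖τ i - P Ω (τ i)‖ ≤ δ := by
    rw [Filter.eventually_all_finset]
    intro i _
    have := (lp.hasSum_single (p := 1) (by simp) (τ i))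
    have h2 := Metric.tendsto_nhds.mp this δ hδ
    refine Filter.Eventually.mono h2 fun Ω hΩ => ?_
    rw [dist_comm, dist_eq_norm] at hΩ
    exact hΩ.le
  obtain ⟨Ω, hΩ⟩ := hev.exists
  refine ⟨ℕ, Ω, fun i ω => τ i ω, fun σ hσ a => ?_⟩
  have hσn : ∀ i ∈ σ, i < n := fun i hi => Finset.mem_range.mp (hσ hi)
  set Z := ∑ i ∈ σ, a i • τ i with hZ
  have eZ : Z = T (∑ i ∈ σ, a i • yF i) := by simp [hZ, τ]
  have eN : ‖∑ i ∈ σ, a i • yF i‖ = ‖∑ i ∈ σ, a i • y i‖ := by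
    rw [Submodule.coe_norm, Submodule.coe_sum]
    congr 1
    refine Finset.sum_congr rfl fun i hi => ?_
    simp [yF, hσn i hi]
  have hT1 := hT (∑ i ∈ σ, a i • yF i)
  rw [← eZ, eN] at hT1
  have eω : ∀ ω, ∑ i ∈ σ, a i * τ i ω = Z ω := by
    intro ω
    rw [hZ, lp.coeFn_sum, Finset.sum_apply]
    rfl
  simp only [eω]
  have hPZ : P Ω Z = ∑ i ∈ σ, a i • P Ω (τ i) := by
    simp only [P, Finset.smul_sum]
    rw [Finset.sum_comm]
    refine Finset.sum_congr rfl fun ω _ => ?_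
    rw [← eω]
    ext ω'
    rw [lp.coeFn_sum, Finset.sum_apply]
    simp only [lp.coeFn_smul, Pi.smul_apply, lp.coeFn_single]
    by_cases hh : ω' = ω
    · subst hh; simp
    · simp [Pi.single_eq_of_ne hh]
  have hPn : ‖P Ω Z‖ ≤ ∑ ω ∈ Ω, |Z ω| := by
    refine (norm_sum_le _ _).trans (Finset.sum_le_sum fun ω _ => ?_)
    rw [lp.norm_single (by simp), Real.norm_eq_abs]
  have hdiff := norm_sum_sub_le σ a τ (fun i => P Ω (τ i)) δ (fun i hi => hΩ i (hσ hi))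
  have hle : ∑ ω ∈ Ω, |Z ω| ≤ ‖Z‖ := by
    have := lp.sum_rpow_le_norm_rpow (p := 1) (by simp) Z Ω
    simpa using this
  have hW0 : 0 ≤ ∑ ω ∈ Ω, |Z ω| := Finset.sum_nonneg fun _ _ => abs_nonneg _
  constructor
  · rw [← hPZ] at hdiff
    have t1 := norm_sub_norm_le Z (P Ω Z)
    have : ∑ ω ∈ Ω, |Z ω| ≤ max M 1 * ∑ ω ∈ Ω, |Z ω| :=
      le_mul_of_one_le_left hW0 (le_max_right _ _)
    linarith [hT1.1]
  · refine hle.trans (hT1.2.trans ?_)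
    gcongr
    exact le_max_left _ _

theorem main_aux {X : Type*} [NormedAddCommGroup X] [NormedSpace ℝ X] [CompleteSpace X]
    {x y : ℕ → X} (hx : ∀ n, x n ≠ 0) (hyx : ∀ k, y k = ‖x k‖⁻¹ • x k) {U : ℝ} (hU : 1 ≤ U)
    (hunc : Unc y U) (ha : StronglyAsymptoticL1 x) {M : ℝ} (hM : 1 ≤ M) (hrep : L1Rep y M) :
    ContainsL1 X := by
  obtain ⟨C, hC, hfam⟩ := asymp_fam ha
  have hC0 : 0 < C := by linarith
  have hy : ∀ k, ‖y k‖ = 1 := fun k => by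
    rw [hyx, norm_smul, norm_inv, norm_norm, inv_mul_cancel₀ (norm_ne_zero_iff.mpr (hx k))]
  have has : ∀ m : ℕ, ∃ N : ℕ, ∀ s : Finset ℕ, s.card = m → (∀ i ∈ s, N ≤ i) →
      C⁻¹ * m ≤ ‖∑ i ∈ s, y i‖ := by
    intro m
    obtain ⟨f, hf⟩ := hfam m
    refine ⟨f, fun s hs hsf => ?_⟩
    have := (hf ℕ s y (fun i => {i}) hs.le (fun l _ => by
      rw [hyx]
      exact Submodule.smul_mem _ _ (Submodule.subset_span ⟨l, by simp, rfl⟩))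
      (fun l hl k hk => by
        rw [Finset.mem_singleton.mp hk]; exact hsf l hl)
      (fun l _ l' _ hll => by simpa using hll) (fun _ => 1)).1
    simpa [hy, hs] using this
  obtain ⟨φ, c', hc', h⟩ := subseq_l1 hy hU hunc (inv_pos.mpr hC0) has hM hrep
  exact containsL1_of_seq (z := fun k => y (φ k)) (fun k => hy _) hc' h

/-- if `X` has an unconditional strongly asymptotic `ℓ¹` basis and is crudely
finitely representable in `ℓ¹`, then `X` contains an isomorphic copy of `ℓ¹`.  Consequently,
such a space containing no copy of `ℓ¹` (e.g. a subspace of Tsirelson space generated by a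
subsequence of its standard basis) does not embed uniformly into all of its own tail
subspaces. -/
theorem asymptoticL1_finrep_contains_l1
    {X : Type*} [NormedAddCommGroup X] [NormedSpace ℝ X] [CompleteSpace X]
    (x : ℕ → X) (hb : IsBasicSeq x)
    (hdense : DenseRange fun a : ℕ →₀ ℝ => ∑ k ∈ a.support, a k • x k)
    (hu : IsUncondBasis x) (ha : StronglyAsymptoticL1 x) :
    (CrudelyFinRepL1 X → ContainsL1 X) ∧
    (¬ ContainsL1 X →
      ¬ ∃ K : ℝ, 0 < K ∧ ∀ m : ℕ,
        Embeds K X ↥((Submodule.span ℝ (x '' {k | m ≤ k})).topologicalClosure)) := by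
  obtain ⟨U, hU, hunc⟩ := unc_of_basis x hu
  have huncy : Unc (fun k => ‖x k‖⁻¹ • x k) U := hunc.normalize _
  have hy : ∀ k, ‖(fun k => ‖x k‖⁻¹ • x k) k‖ = 1 := fun k => by
    show ‖‖x k‖⁻¹ • x k‖ = 1
    rw [norm_smul, norm_inv, norm_norm, inv_mul_cancel₀ (norm_ne_zero_iff.mpr (hb.1 k))]
  constructor
  · intro h
    obtain ⟨M, hM, hrep⟩ := rep_of_finrep (y := fun k => ‖x k‖⁻¹ • x k) h
    exact main_aux hb.1 (fun _ => rfl) hU huncy ha hM hrep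
  · rintro hno ⟨K, hK, hemb⟩
    obtain ⟨M, hM, hrep⟩ := rep_of_tail hU hunc huncy hy ha hK hemb
    exact hno (main_aux hb.1 (fun _ => rfl) hU huncy ha hM hrep)
end
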